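/- For a Z-interference channel satisfying Conditions 1 and 2, with side information V1 = h1(U1) (a deterministic letterwise function of the interfering source U1) available at Receiver 2 and no side information at Receiver 1: the sources U1 and U2 can be transmitted reliably if there exists a finite-valued auxiliary random variable W with distribution p(w)p(x1|w), joint law p(u1,v1,u2,w,x1,x2,y1,y2) = p(u1,v1) p(u2) p(w) p(x1|w) p*(x2) p(y1|x1) p(y2|x1,x2), such that H(U1) < I(X1;Y1), H(U2) < I(W,X2;Y2), and H(U1|V1) + H(U2) < I(W,X2;Y2) + I(X1;Y1|W). Conversely, if the sources can be transmitted reliably, then there exists such a W for which the corresponding non-strict inequalities hold. -/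

import Mathlib

open Finset Real Filter
open scoped Classical

namespace Paper

/-- `p` is a probability mass function on the finite type `α`. -/
def IsPMF {α : Type*} [Fintype α] (p : α → ℝ) : Prop :=
  (∀ a, 0 ≤ p a) ∧ ∑ a, p a = 1

/-- `k` is a transition probability (channel) from `α` to the finite type `β`. -/
def IsKernel {α β : Type*} [Fintype β] (k : α → β → ℝ) : Prop :=
  ∀ a, IsPMF (k a)

variable {Ω : Type*} [Fintype Ω]

/-- Probability that the random variable `X` takes the value `x`, under the weight `p`. -/
noncomputable def pr {α : Type*} (p : Ω → ℝ) (X : Ω → α) (x : α) : ℝ :=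
  ∑ ω, if X ω = x then p ω else 0

/-- Shannon entropy (base 2) of the random variable `X` under `p`. -/
noncomputable def ent {α : Type*} [Fintype α] (p : Ω → ℝ) (X : Ω → α) : ℝ :=
  ∑ x, -(pr p X x * Real.logb 2 (pr p X x))

/-- Conditional entropy `H(X|Y) = H(X,Y) - H(Y)`. -/
noncomputable def condEnt {α β : Type*} [Fintype α] [Fintype β]
    (p : Ω → ℝ) (X : Ω → α) (Y : Ω → β) : ℝ :=
  ent p (fun ω => (X ω, Y ω)) - ent p Y

/-- Mutual information `I(X;Y) = H(X) + H(Y) - H(X,Y)`. -/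
noncomputable def mi {α β : Type*} [Fintype α] [Fintype β]
    (p : Ω → ℝ) (X : Ω → α) (Y : Ω → β) : ℝ :=
  ent p X + ent p Y - ent p (fun ω => (X ω, Y ω))

/-- Conditional mutual information `I(X;Y|Z) = H(X,Z) + H(Y,Z) - H(X,Y,Z) - H(Z)`. -/
noncomputable def cmi {α β γ : Type*} [Fintype α] [Fintype β] [Fintype γ]
    (p : Ω → ℝ) (X : Ω → α) (Y : Ω → β) (Z : Ω → γ) : ℝ :=
  ent p (fun ω => (X ω, Z ω)) + ent p (fun ω => (Y ω, Z ω))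
    - ent p (fun ω => (X ω, Y ω, Z ω)) - ent p Z

/-- The Markov chain `A → B → C`: `A` and `C` are conditionally independent given `B`. -/
def MarkovChain {α β γ : Type*} (p : Ω → ℝ) (A : Ω → α) (B : Ω → β) (C : Ω → γ) : Prop :=
  ∀ a b c, pr p (fun ω => (A ω, B ω, C ω)) (a, b, c) * pr p B b =
    pr p (fun ω => (A ω, B ω)) (a, b) * pr p (fun ω => (B ω, C ω)) (b, c)

section ZChannel

variable {X1 X2 Y1 Y2 : Type} [Fintype X1] [Fintype X2] [Fintype Y1] [Fintype Y2]

/-- `H(Y_2^n | X_2^n = x_2^n)`: the output entropy of the `n`-letter channel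
`p(y_2^n|x_1^n, x_2^n)` when `X_1^n ~ μ` and the second input is fixed to `x_2^n`. -/
noncomputable def entY2n (ch2 : X1 × X2 → Y2 → ℝ) (n : ℕ)
    (μ : (Fin n → X1) → ℝ) (x2 : Fin n → X2) : ℝ :=
  ent (fun w : (Fin n → X1) × (Fin n → Y2) => μ w.1 * ∏ i, ch2 (w.1 i, x2 i) (w.2 i)) Prod.snd

/-- Condition 1: for every `n` and every input distribution `p(x_1^n)`,
`H(Y_2^n|X_2^n = x_2^n)` does not depend on `x_2^n`. -/
def Cond1 (ch2 : X1 × X2 → Y2 → ℝ) : Prop :=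
  ∀ (n : ℕ) (μ : (Fin n → X1) → ℝ), IsPMF μ →
    ∀ x2 x2' : Fin n → X2, entY2n ch2 n μ x2 = entY2n ch2 n μ x2'

/-- The single-letter output entropy `H(Y_2)` for independent inputs `p(x_1) p(x_2)`. -/
noncomputable def entY2 (ch2 : X1 × X2 → Y2 → ℝ) (p1 : X1 → ℝ) (p2 : X2 → ℝ) : ℝ :=
  ent (fun w : X1 × X2 × Y2 => p1 w.1 * p2 w.2.1 * ch2 (w.1, w.2.1) w.2.2) (fun w => w.2.2)

/-- `τ = max_{p(x_1) p(x_2)} H(Y_2)`. -/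
noncomputable def tau (ch2 : X1 × X2 → Y2 → ℝ) : ℝ :=
  sSup { t | ∃ p1 p2, IsPMF p1 ∧ IsPMF p2 ∧ t = entY2 ch2 p1 p2 }

/-- Condition 2, with witness `p*`: for every `p(x_1)`, the output entropy `H(Y_2)` under
`p(x_1) p*(x_2)` equals `τ`. -/
def Cond2 (ch2 : X1 × X2 → Y2 → ℝ) (pstar : X2 → ℝ) : Prop :=
  IsPMF pstar ∧ ∀ p1 : X1 → ℝ, IsPMF p1 → entY2 ch2 p1 pstar = tau ch2

end ZChannel

/-! ## Statement 6: necessary and sufficient conditions for reliable transmission over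
a class of Z-interference channels with deterministic side information `V1 = h1(U1)`
at Receiver 2. -/

section Stmt6

variable {U1 V1 U2 X1 X2 Y1 Y2 : Type}
  [Fintype U1] [Fintype V1] [Fintype U2]
  [Fintype X1] [Fintype X2] [Fintype Y1] [Fintype Y2]

/-- Error probability of a length-`n` joint source-channel code for the Z-interference
channel, where Receiver 2 has side information `V_1^n = h1(U_1^n)` (letterwise) and
Receiver 1 has no side information. -/
noncomputable def PerrZDet (ch1 : X1 → Y1 → ℝ) (ch2 : X1 × X2 → Y2 → ℝ)
    (pU1 : U1 → ℝ) (h1 : U1 → V1) (pU2 : U2 → ℝ) (n : ℕ)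
    (f1 : (Fin n → U1) → Fin n → X1) (f2 : (Fin n → U2) → Fin n → X2)
    (g1 : (Fin n → Y1) → Fin n → U1)
    (g2 : (Fin n → Y2) → (Fin n → V1) → Fin n → U2) : ℝ :=
  ∑ u1 : Fin n → U1, ∑ u2 : Fin n → U2, ∑ y1 : Fin n → Y1, ∑ y2 : Fin n → Y2,
    (∏ i, pU1 (u1 i)) * (∏ i, pU2 (u2 i)) *
    (∏ i, ch1 (f1 u1 i) (y1 i)) * (∏ i, ch2 (f1 u1 i, f2 u2 i) (y2 i)) *
    (if g1 y1 = u1 ∧ g2 y2 (fun i => h1 (u1 i)) = u2 then 0 else 1)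

/-- Reliable transmission for the Z-interference channel with deterministic side
information `V1 = h1(U1)` at Receiver 2. -/
def ReliableZDet (ch1 : X1 → Y1 → ℝ) (ch2 : X1 × X2 → Y2 → ℝ)
    (pU1 : U1 → ℝ) (h1 : U1 → V1) (pU2 : U2 → ℝ) : Prop :=
  ∃ (f1 : ∀ n : ℕ, (Fin n → U1) → Fin n → X1)
    (f2 : ∀ n : ℕ, (Fin n → U2) → Fin n → X2)
    (g1 : ∀ n : ℕ, (Fin n → Y1) → Fin n → U1)
    (g2 : ∀ n : ℕ, (Fin n → Y2) → (Fin n → V1) → Fin n → U2),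
    Tendsto (fun n => PerrZDet ch1 ch2 pU1 h1 pU2 n (f1 n) (f2 n) (g1 n) (g2 n))
      atTop (nhds 0)

/-- The single-letter joint law `p(w) p(x_1|w) p*(x_2) p(y_1|x_1) p(y_2|x_1,x_2)`. -/
noncomputable def jointZ (m : ℕ) (pW : Fin m → ℝ) (k : Fin m → X1 → ℝ) (p2 : X2 → ℝ)
    (ch1 : X1 → Y1 → ℝ) (ch2 : X1 × X2 → Y2 → ℝ) :
    Fin m × X1 × X2 × Y1 × Y2 → ℝ :=
  fun (w, x1, x2, y1, y2) => pW w * k w x1 * p2 x2 * ch1 x1 y1 * ch2 (x1, x2) y2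

/-
Achievability is by superposition coding. The source word `u` of the first sender is thrown at
random into one of `exp (n R)` bins; a cloud centre `W^n` is attached to each pair formed by a
value of `V1^n` and a bin, and a satellite codeword `X1^n` to each `u`. Receiver 1 decodes `u`,
which works when `H(U1) < I(X1;Y1)` and `H(U1|V1) - R < I(X1;Y1|W)`. Receiver 2 knows `V1^n` and
decodes its own word together with the unknown bin, which works when `H(U2) < I(X2;Y2|W)` and
`H(U2) + R < I(W,X2;Y2)`. Condition 2 makes `Y2` independent of `W`, so
`I(X2;Y2|W) = I(W,X2;Y2)`, and the assumed inequalities are what leaves room for a rate `R ≥ 0`.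

For the converse, Fano's inequality given `V1^n` bounds the source entropies by block
informations, and Condition 1 replaces `X2^n` by a constant in `H(Y2^n|X2^n,V1^n)`. What remains
is to compare the block entropies `H(Y1^n|V1^n)` and `H(Y2^n|V1^n)` of two memoryless channels with
a common input. Splitting off one letter at a time, conditioned as in the Csiszár sum identity,
expresses both as convex combinations of one-letter entropies plus the same nonnegative amount.
That amount cancels in the bound on the sum and only weakens the bound on `H(U2)`. The convex hull
of the one-letter points is compact by Carathéodory's theorem, so the bounds survive the limit,
and a point of the hull is an auxiliary variable `W` with finitely many values.
-/

/-- The indicator of a proposition, as a real number. -/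
noncomputable def ind (P : Prop) : ℝ := if P then 1 else 0

/-- The expectation of `f` under the weight `p`. -/
noncomputable def mean {α : Type*} [Fintype α] (p f : α → ℝ) : ℝ := ∑ a, p a * f a

/-- The law of the output of the channel `c` when its input has law `p`. -/
noncomputable def outputLaw {α β : Type*} [Fintype α] (p : α → ℝ) (c : α → β → ℝ) : β → ℝ :=
  fun b => mean p fun a => c a b

/-- The joint law of the input and the output of the channel `c` when its input has law `p`. -/
def jointLaw {α β : Type*} (p : α → ℝ) (c : α → β → ℝ) : α × β → ℝ :=
  fun x => p x.1 * c x.1 x.2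

/-- The law of a family of independent variables, the `i`-th of which has law `p i`. For a
channel `c`, `fun x => prodLaw fun i => c (x i)` is its memoryless extension to blocks. -/
def prodLaw {ι α : Type*} [Fintype ι] (p : ι → α → ℝ) : (ι → α) → ℝ :=
  fun x => ∏ i, p i (x i)

section Expectation

variable {α β γ ι : Type*} [Fintype α] [Fintype β] [Fintype ι]

lemma ind_true {P : Prop} (h : P) : ind P = 1 := if_pos h

lemma ind_false {P : Prop} (h : ¬P) : ind P = 0 := if_neg h

lemma ind_not (P : Prop) [Decidable P] : ind (¬P) = if P then 0 else 1 := by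
  unfold ind; split_ifs <;> rfl

lemma ind_nonneg (P : Prop) : 0 ≤ ind P := by
  unfold ind; split_ifs <;> norm_num

lemma ind_le_one (P : Prop) : ind P ≤ 1 := by
  unfold ind; split_ifs <;> norm_num

lemma ind_mono {P Q : Prop} (h : P → Q) : ind P ≤ ind Q := by
  by_cases hP : P
  · rw [ind_true hP, ind_true (h hP)]
  · exact (ind_false hP).trans_le (ind_nonneg Q)

lemma ind_or_le (P Q : Prop) : ind (P ∨ Q) ≤ ind P + ind Q := by
  by_cases hP : P <;> by_cases hQ : Q <;> simp [ind, hP, hQ]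

lemma ind_exists_le (P : ι → Prop) : ind (∃ i, P i) ≤ ∑ i, ind (P i) := by
  by_cases h : ∃ i, P i
  · obtain ⟨i, hi⟩ := h
    calc ind (∃ i, P i) ≤ ind (P i) := (ind_le_one _).trans_eq (ind_true hi).symm
      _ ≤ ∑ i, ind (P i) :=
        single_le_sum (f := fun i => ind (P i)) (fun i _ => ind_nonneg _) (mem_univ i)
  · exact (ind_false h).trans_le (sum_nonneg fun i _ => ind_nonneg _)

lemma ind_eq_prod_ind (x y : ι → γ) : ind (x = y) = ∏ i, ind (x i = y i) := by
  by_cases h : x = y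
  · simp [h, ind]
  · obtain ⟨i, hi⟩ := Function.ne_iff.1 h
    rw [ind_false h, prod_eq_zero (mem_univ i) (ind_false hi)]

lemma mean_const {p : α → ℝ} (hp : IsPMF p) (c : ℝ) : mean p (fun _ => c) = c := by
  rw [mean, ← sum_mul, hp.2, one_mul]

lemma mean_add (p f g : α → ℝ) : mean p (fun a => f a + g a) = mean p f + mean p g := by
  simp only [mean, mul_add, sum_add_distrib]

lemma mean_sub (p f g : α → ℝ) : mean p (fun a => f a - g a) = mean p f - mean p g := by
  simp only [mean, mul_sub, sum_sub_distrib]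

lemma mean_neg (p f : α → ℝ) : mean p (fun a => -f a) = -mean p f := by
  simp only [mean, mul_neg, sum_neg_distrib]

lemma mean_const_mul (p : α → ℝ) (c : ℝ) (f : α → ℝ) :
    mean p (fun a => c * f a) = c * mean p f := by
  simp only [mean, mul_sum, mul_left_comm]

lemma mean_mul_const (p : α → ℝ) (f : α → ℝ) (c : ℝ) :
    mean p (fun a => f a * c) = mean p f * c := by
  simp only [mean, sum_mul, mul_assoc]

lemma mean_finset_sum {κ : Type*} (s : Finset κ) (p : α → ℝ) (f : κ → α → ℝ) :
    mean p (fun a => ∑ j ∈ s, f j a) = ∑ j ∈ s, mean p (f j) := by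
  simp only [mean, mul_sum]
  exact sum_comm

lemma mean_finset_sum_left {κ : Type*} (s : Finset κ) (p : κ → α → ℝ) (f : α → ℝ) :
    mean (∑ j ∈ s, p j) f = ∑ j ∈ s, mean (p j) f := by
  simp only [mean, Finset.sum_apply, sum_mul]
  exact sum_comm

lemma mean_smul_left (c : ℝ) (p f : α → ℝ) : mean (c • p) f = c * mean p f := by
  simp only [mean, Pi.smul_apply, smul_eq_mul, mul_sum, mul_assoc]

lemma mean_ind_eq (p : α → ℝ) (a : α) : mean p (fun x => ind (x = a)) = p a := by
  simp [mean, ind]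

lemma mean_ind_eq_mul (p : α → ℝ) (a : α) (f : α → ℝ) :
    mean p (fun x => ind (x = a) * f x) = p a * f a := by
  simp [mean, ind]

lemma mean_comm (p : α → ℝ) (q : β → ℝ) (f : α → β → ℝ) :
    mean p (fun a => mean q (f a)) = mean q fun b => mean p fun a => f a b := by
  simp only [mean, mul_sum, mul_left_comm]
  exact sum_comm

lemma mean_outputLaw (p : α → ℝ) (c : α → β → ℝ) (f : β → ℝ) :
    mean (outputLaw p c) f = mean p fun a => mean (c a) f := by
  simp only [outputLaw, mean, mul_sum, sum_mul, mul_assoc]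
  exact sum_comm

lemma mean_jointLaw (p : α → ℝ) (c : α → β → ℝ) (f : α × β → ℝ) :
    mean (jointLaw p c) f = mean p fun a => mean (c a) fun b => f (a, b) := by
  simp only [jointLaw, mean, Fintype.sum_prod_type, mul_sum, mul_assoc]

lemma mean_mono {p f g : α → ℝ} (hp : IsPMF p) (h : ∀ a, 0 < p a → f a ≤ g a) :
    mean p f ≤ mean p g := by
  refine sum_le_sum fun a _ => ?_
  rcases (hp.1 a).eq_or_lt with h0 | hpos
  · simp only [← h0, zero_mul, le_refl]
  · exact mul_le_mul_of_nonneg_left (h a hpos) hpos.le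

lemma mean_congr {p f g : α → ℝ} (hp : IsPMF p) (h : ∀ a, 0 < p a → f a = g a) :
    mean p f = mean p g :=
  le_antisymm (mean_mono hp fun a ha => (h a ha).le) (mean_mono hp fun a ha => (h a ha).ge)

lemma mean_nonneg {p f : α → ℝ} (hp : IsPMF p) (h : ∀ a, 0 ≤ f a) : 0 ≤ mean p f :=
  sum_nonneg fun a _ => mul_nonneg (hp.1 a) (h a)

lemma mean_le {p f : α → ℝ} {c : ℝ} (hp : IsPMF p) (h : ∀ a, f a ≤ c) : mean p f ≤ c :=
  (mean_mono hp fun a _ => h a).trans_eq (mean_const hp c)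

lemma IsPMF.nonempty {p : α → ℝ} (hp : IsPMF p) : Nonempty α := by
  by_contra h
  rw [not_nonempty_iff] at h
  simpa using hp.2

lemma exists_le_mean {p : α → ℝ} (hp : IsPMF p) (f : α → ℝ) : ∃ a, f a ≤ mean p f := by
  have := hp.nonempty
  obtain ⟨a, ha⟩ := Finite.exists_min f
  exact ⟨a, (mean_const hp _).symm.trans_le (mean_mono hp fun b _ => ha b)⟩

end Expectation

section Laws

variable {α β γ ι : Type*} [Fintype α] [Fintype ι] [DecidableEq ι]

lemma sum_pi_prod (f : ι → α → ℝ) : ∑ x : ι → α, ∏ i, f i (x i) = ∏ i, ∑ a, f i a := by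
  rw [prod_univ_sum, Fintype.piFinset_univ]

lemma IsPMF.prodLaw {p : ι → α → ℝ} (hp : ∀ i, IsPMF (p i)) : IsPMF (prodLaw p) := by
  refine ⟨fun x => prod_nonneg fun i _ => (hp i).1 _, ?_⟩
  simp only [Paper.prodLaw, sum_pi_prod, (hp _).2, prod_const_one]

lemma IsKernel.prodLaw {c : ι → β → α → ℝ} (hc : ∀ i, IsKernel (c i)) :
    IsKernel fun x : ι → β => prodLaw fun i => c i (x i) :=
  fun x => IsPMF.prodLaw fun i => hc i (x i)

lemma mean_prodLaw_prod (p f : ι → α → ℝ) :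
    mean (prodLaw p) (fun x => ∏ i, f i (x i)) = ∏ i, mean (p i) (f i) := by
  simp only [mean, prodLaw, ← prod_mul_distrib]
  exact sum_pi_prod fun i a => p i a * f i a

lemma outputLaw_prodLaw (p : ι → α → ℝ) (c : ι → α → β → ℝ) :
    outputLaw (prodLaw p) (fun x => prodLaw fun i => c i (x i)) =
      prodLaw fun i => outputLaw (p i) (c i) :=
  funext fun y => mean_prodLaw_prod p fun i a => c i a (y i)

lemma mean_prodLaw_split (p : ι → α → ℝ) (i : ι) (F : (ι → α) → ℝ) :
    mean (prodLaw p) F = mean (p i) fun a => mean (prodLaw fun j : {j // j ≠ i} => p j)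
      fun y => F ((Equiv.funSplitAt i α).symm (a, y)) := by
  rw [mean, ← (Equiv.funSplitAt i α).symm.sum_comp, Fintype.sum_prod_type]
  simp only [mean, prodLaw, mul_sum, ← mul_assoc]
  refine sum_congr rfl fun a _ => sum_congr rfl fun y _ => ?_
  rw [Fintype.prod_eq_mul_prod_subtype_ne _ i]
  congr 2
  · simp
  · exact prod_congr rfl fun j _ => by simp [j.2]

lemma mean_prodLaw_apply {p : ι → α → ℝ} (hp : ∀ i, IsPMF (p i)) (i : ι) (f : α → ℝ) :
    mean (prodLaw p) (fun x => f (x i)) = mean (p i) f := by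
  simp only [mean_prodLaw_split p i, Equiv.funSplitAt_symm_apply, dite_true,
    mean_const (IsPMF.prodLaw fun j : {j // j ≠ i} => hp j)]

lemma mean_prodLaw_apply_apply {p : ι → α → ℝ} (hp : ∀ i, IsPMF (p i)) {i j : ι} (hij : i ≠ j)
    (f : α → α → ℝ) :
    mean (prodLaw p) (fun x => f (x i) (x j)) = mean (p i) fun a => mean (p j) (f a) := by
  simp only [mean_prodLaw_split p i, Equiv.funSplitAt_symm_apply, dite_true, hij.symm, dite_false]
  exact congrArg _ (funext fun a =>
    mean_prodLaw_apply (fun k : {k // k ≠ i} => hp k) ⟨j, hij.symm⟩ (f a))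

lemma pr_eq_mean (p : α → ℝ) (X : α → γ) (x : γ) : pr p X x = mean p fun a => ind (X a = x) := by
  simp only [pr, mean, ind, mul_ite, mul_one, mul_zero]

lemma pr_prodLaw {p : ι → α → ℝ} {X : ι → α → γ} {q : ι → γ → ℝ} (h : ∀ i, pr (p i) (X i) = q i) :
    pr (prodLaw p) (fun x i => X i (x i)) = prodLaw q := by
  funext y
  simp only [← funext h, pr_eq_mean, ind_eq_prod_ind]
  simp only [prodLaw, pr_eq_mean]
  exact mean_prodLaw_prod p fun i a => ind (X i a = y i)

lemma jointLaw_pos {p : α → ℝ} (hp : IsPMF p) {c : α → β → ℝ} {x : α × β}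
    (hx : 0 < jointLaw p c x) : 0 < p x.1 ∧ 0 < c x.1 x.2 :=
  (pos_and_pos_or_neg_and_neg_of_mul_pos hx).resolve_right fun h => h.1.not_ge (hp.1 _)

variable [Fintype β] [Fintype γ]

lemma mean_prodLaw_jointLaw (p : ι → α → ℝ) (c : ι → α → β → ℝ) (F : (ι → α × β) → ℝ) :
    mean (prodLaw fun i => jointLaw (p i) (c i)) F =
      mean (prodLaw p) fun x => mean (prodLaw fun i => c i (x i)) fun y =>
        F fun i => (x i, y i) := by
  rw [mean, ← (Equiv.arrowProdEquivProdArrow ι (fun _ => α) (fun _ => β)).symm.sum_comp,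
    Fintype.sum_prod_type]
  simp only [mean, prodLaw, jointLaw, mul_sum, ← mul_assoc, prod_mul_distrib]
  rfl

lemma IsPMF.outputLaw {p : α → ℝ} (hp : IsPMF p) {c : α → β → ℝ} (hc : IsKernel c) :
    IsPMF (outputLaw p c) := by
  refine ⟨fun b => mean_nonneg hp fun a => (hc a).1 b, ?_⟩
  simp only [Paper.outputLaw, ← mean_finset_sum, (hc _).2, mean_const hp]

lemma IsPMF.jointLaw {p : α → ℝ} (hp : IsPMF p) {c : α → β → ℝ} (hc : IsKernel c) :
    IsPMF (jointLaw p c) := by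
  refine ⟨fun x => mul_nonneg (hp.1 _) ((hc _).1 _), ?_⟩
  simp only [Paper.jointLaw, Fintype.sum_prod_type, ← mul_sum, (hc _).2, mul_one, hp.2]

lemma outputLaw_pos {p : α → ℝ} (hp : IsPMF p) {c : α → β → ℝ} (hc : IsKernel c) {x : α × β}
    (hx : 0 < jointLaw p c x) : 0 < outputLaw p c x.2 :=
  hx.trans_le <| single_le_sum (f := fun a => p a * c a x.2)
    (fun a _ => mul_nonneg (hp.1 a) ((hc a).1 _)) (mem_univ x.1)

lemma mean_pr (p : α → ℝ) (X : α → γ) (f : γ → ℝ) :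
    mean (pr p X) f = mean p fun a => f (X a) := by
  rw [mean]
  simp only [pr_eq_mean, ← mean_mul_const, ← mean_finset_sum]
  simp [ind]

lemma pr_eq_iff {p : α → ℝ} {X : α → γ} {q : γ → ℝ} :
    pr p X = q ↔ ∀ f, mean p (fun a => f (X a)) = mean q f := by
  refine ⟨fun h f => by rw [← h, mean_pr], fun h => funext fun x => ?_⟩
  rw [pr_eq_mean, h fun y => ind (y = x), mean_ind_eq]

lemma isPMF_pr {p : α → ℝ} (hp : IsPMF p) (X : α → γ) : IsPMF (pr p X) := by
  refine ⟨fun x => ?_, ?_⟩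
  · rw [pr_eq_mean]
    exact mean_nonneg hp fun a => ind_nonneg _
  · simpa only [mean, mul_one] using (mean_pr p X fun _ => 1).trans (mean_const hp 1)

lemma exists_disintegration {p : α → ℝ} (hp : IsPMF p) (X : α → β) (Y : α → γ) :
    ∃ κ : β → γ → ℝ, IsKernel κ ∧ pr p (fun a => (X a, Y a)) = jointLaw (pr p X) κ := by
  have hq := isPMF_pr hp X
  have hj := isPMF_pr hp fun a => (X a, Y a)
  have hsum : ∀ x, ∑ y, pr p (fun a => (X a, Y a)) (x, y) = pr p X x := fun x => by
    simp only [pr_eq_mean, ← mean_finset_sum, Prod.mk.injEq]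
    congr 1; funext a
    by_cases h : X a = x <;> simp [ind, h]
  refine ⟨fun x => if pr p X x = 0 then pr p Y else
    fun y => pr p (fun a => (X a, Y a)) (x, y) / pr p X x, fun x => ?_, ?_⟩
  · dsimp only
    split_ifs with h0
    · exact isPMF_pr hp Y
    · exact ⟨fun y => div_nonneg (hj.1 _) (hq.1 x), by rw [← sum_div, hsum, div_self h0]⟩
  · funext ⟨x, y⟩
    dsimp only [Paper.jointLaw]
    split_ifs with h0
    · rw [h0, zero_mul]
      exact (sum_eq_zero_iff_of_nonneg fun y _ => hj.1 (x, y)).1 ((hsum x).trans h0) y (mem_univ y)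
    · exact (mul_div_cancel₀ _ h0).symm

end Laws

/-- The Shannon entropy of the law `q`, in nats. -/
noncomputable def natEntropy {α : Type*} [Fintype α] (q : α → ℝ) : ℝ := ∑ a, negMulLog (q a)

/-- The mutual information, in nats, between the input and the output of the channel `c` when its
input has law `p`. -/
noncomputable def infoNats {α β : Type*} [Fintype α] [Fintype β] (p : α → ℝ) (c : α → β → ℝ) : ℝ :=
  natEntropy (outputLaw p c) - mean p fun a => natEntropy (c a)

section Entropy

variable {α β γ ι : Type*} [Fintype α] [Fintype β] [Fintype γ] [Fintype ι]

lemma natEntropy_eq_mean (q : α → ℝ) : natEntropy q = mean q fun a => -log (q a) := by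
  simp only [natEntropy, mean, negMulLog, neg_mul, mul_neg]

lemma natEntropy_nonneg {q : α → ℝ} (hq : IsPMF q) : 0 ≤ natEntropy q :=
  sum_nonneg fun a _ => negMulLog_nonneg (hq.1 a) <|
    (single_le_sum (fun b _ => hq.1 b) (mem_univ a)).trans_eq hq.2

lemma natEntropy_jointLaw (p : α → ℝ) {c : α → β → ℝ} (hc : IsKernel c) :
    natEntropy (jointLaw p c) = natEntropy p + mean p fun a => natEntropy (c a) := by
  simp only [natEntropy, jointLaw, mean, Fintype.sum_prod_type, negMulLog_mul, sum_add_distrib,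
    ← sum_mul, (hc _).2, one_mul, mul_sum]

lemma natEntropy_comp_equiv (e : α ≃ β) (q : β → ℝ) : natEntropy (q ∘ e) = natEntropy q :=
  e.sum_comp fun b => negMulLog (q b)

lemma natEntropy_le_mean_neg_log {p q : α → ℝ} (hp : IsPMF p) (hq : ∀ a, 0 ≤ q a)
    (hq1 : ∑ a, q a ≤ 1) (hpq : ∀ a, 0 < p a → 0 < q a) :
    natEntropy p ≤ mean p fun a => -log (q a) := by
  have hlog : mean p (fun a => log (q a) - log (p a)) ≤ mean p fun a => q a / p a - 1 :=
    mean_mono hp fun a ha => by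
      rw [← log_div (hpq a ha).ne' ha.ne']
      exact log_le_sub_one_of_pos (div_pos (hpq a ha) ha)
  have hratio : mean p (fun a => q a / p a) ≤ 1 := by
    refine (sum_le_sum fun a _ => ?_).trans hq1
    rcases (hp.1 a).eq_or_lt with h0 | hpos
    · simpa [← h0] using hq a
    · exact (mul_div_cancel₀ _ hpos.ne').le
  rw [mean_sub, mean_sub, mean_const hp] at hlog
  rw [natEntropy_eq_mean, mean_neg, mean_neg]
  linarith

lemma natEntropy_le_log_card {p : α → ℝ} (hp : IsPMF p) :
    natEntropy p ≤ log (Fintype.card α) := by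
  have := hp.nonempty
  have hcard : (0 : ℝ) < Fintype.card α := by exact_mod_cast Fintype.card_pos
  refine (natEntropy_le_mean_neg_log hp (q := fun _ => (Fintype.card α : ℝ)⁻¹)
    (fun _ => by positivity) ?_ fun _ _ => by positivity).trans ?_
  · rw [sum_const, card_univ, nsmul_eq_mul, mul_inv_cancel₀ hcard.ne']
  · rw [mean_const hp, log_inv, neg_neg]

lemma le_pr_apply {δ : Type*} {p : α → ℝ} (hp : IsPMF p) (X : α → δ) (a : α) :
    p a ≤ pr p X (X a) := by
  refine le_trans ?_ (single_le_sum (fun b _ => ?_) (mem_univ a))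
  · rw [if_pos rfl]
  · split_ifs
    exacts [hp.1 b, le_rfl]

lemma natEntropy_le_sum_natEntropy_pr [DecidableEq ι] {P : (ι → α) → ℝ} (hP : IsPMF P) :
    natEntropy P ≤ ∑ i, natEntropy (pr P fun x => x i) := by
  have hpos : ∀ x, 0 < P x → ∀ i, 0 < pr P (fun x => x i) (x i) := fun x hx i =>
    hx.trans_le (le_pr_apply hP (fun x => x i) x)
  have hm : IsPMF (prodLaw fun i => pr P fun x => x i) := IsPMF.prodLaw fun i => isPMF_pr hP _
  calc natEntropy P ≤ mean P fun x => -log (prodLaw (fun i => pr P fun x => x i) x) :=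
        natEntropy_le_mean_neg_log hP hm.1 hm.2.le fun x hx => prod_pos fun i _ => hpos x hx i
    _ = mean P fun x => ∑ i, -log (pr P (fun x => x i) (x i)) :=
        mean_congr hP fun x hx => by
          rw [prodLaw, log_prod fun i _ => (hpos x hx i).ne', sum_neg_distrib]
    _ = ∑ i, natEntropy (pr P fun x => x i) := by
        rw [mean_finset_sum]
        exact sum_congr rfl fun i _ => by rw [natEntropy_eq_mean, mean_pr]

lemma natEntropy_prodLaw [DecidableEq ι] {p : ι → α → ℝ} (hp : ∀ i, IsPMF (p i)) :
    natEntropy (prodLaw p) = ∑ i, natEntropy (p i) := by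
  calc natEntropy (prodLaw p) = mean (prodLaw p) fun x => ∑ i, -log (p i (x i)) := by
        rw [natEntropy_eq_mean]
        refine mean_congr (IsPMF.prodLaw hp) fun x hx => ?_
        rw [prodLaw, log_prod fun i hi => prod_ne_zero_iff.1 hx.ne' i hi, sum_neg_distrib]
    _ = ∑ i, natEntropy (p i) := by
        rw [mean_finset_sum]
        exact sum_congr rfl fun i _ => by
          rw [natEntropy_eq_mean, mean_prodLaw_apply hp i fun a => -log (p i a)]

lemma infoNats_nonneg {p : α → ℝ} (hp : IsPMF p) {c : α → β → ℝ} (hc : IsKernel c) :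
    0 ≤ infoNats p c := by
  rw [infoNats, sub_nonneg]
  simp only [natEntropy, mean_finset_sum]
  exact sum_le_sum fun b _ => concaveOn_negMulLog.le_map_sum (fun a _ => hp.1 a) hp.2
    fun a _ => (hc a).1 b

lemma infoNats_jointLaw_snd (p : α → ℝ) (k : α → β → ℝ) (c : β → γ → ℝ) :
    infoNats (jointLaw p k) (fun x => c x.2) = infoNats (outputLaw p k) c := by
  have hout : outputLaw (jointLaw p k) (fun x => c x.2) = outputLaw (outputLaw p k) c :=
    funext fun y => by rw [outputLaw, mean_jointLaw, outputLaw, mean_outputLaw]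
  rw [infoNats, infoNats, hout, mean_jointLaw, mean_outputLaw]

lemma ent_eq (p : γ → ℝ) (X : γ → α) : ent p X = natEntropy (pr p X) / log 2 := by
  simp only [ent, natEntropy, negMulLog, sum_div, logb]
  exact sum_congr rfl fun x _ => by ring

lemma ent_id (p : α → ℝ) : ent p id = natEntropy p / log 2 := by
  rw [ent_eq, show pr p id = p from pr_eq_iff.2 fun f => rfl]

lemma ent_equiv_comp (p : γ → ℝ) (X : γ → α) (e : α ≃ β) : ent p (fun a => e (X a)) = ent p X := by
  rw [ent_eq, ent_eq, ← natEntropy_comp_equiv e]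
  congr 2
  exact funext fun x => by simp [pr]

lemma pr_eq_of_pr_prod {p : γ → ℝ} {X : γ → α} {Y : γ → β} {P : α → ℝ} {c : α → β → ℝ}
    (hc : IsKernel c) (h : pr p (fun a => (X a, Y a)) = jointLaw P c) :
    pr p X = P ∧ pr p Y = outputLaw P c := by
  rw [pr_eq_iff] at h
  refine ⟨pr_eq_iff.2 fun f => ?_, pr_eq_iff.2 fun f => ?_⟩
  · simpa only [mean_jointLaw, mean_const (hc _)] using h fun x => f x.1
  · simpa only [mean_jointLaw, mean_outputLaw] using h fun x => f x.2

lemma ent_prod_eq {p : γ → ℝ} {X : γ → α} {Y : γ → β} {P : α → ℝ} {c : α → β → ℝ}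
    (hc : IsKernel c) (h : pr p (fun a => (X a, Y a)) = jointLaw P c) :
    ent p (fun a => (X a, Y a)) = (natEntropy P + mean P fun a => natEntropy (c a)) / log 2 := by
  rw [ent_eq, h, natEntropy_jointLaw P hc]

lemma condEnt_eq {p : γ → ℝ} {X : γ → α} {Y : γ → β} {P : β → ℝ} {c : β → α → ℝ}
    (hc : IsKernel c) (h : pr p (fun a => (Y a, X a)) = jointLaw P c) :
    condEnt p X Y = (mean P fun b => natEntropy (c b)) / log 2 := by
  rw [condEnt, ← ent_equiv_comp p (fun a => (X a, Y a)) (Equiv.prodComm α β)]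
  simp only [Equiv.prodComm_apply, Prod.swap_prod_mk]
  rw [ent_prod_eq hc h, ent_eq p Y, (pr_eq_of_pr_prod hc h).1]
  ring

lemma mi_eq {p : γ → ℝ} {X : γ → α} {Y : γ → β} {P : α → ℝ} {c : α → β → ℝ}
    (hc : IsKernel c) (h : pr p (fun a => (X a, Y a)) = jointLaw P c) :
    mi p X Y = infoNats P c / log 2 := by
  rw [mi, ent_prod_eq hc h, ent_eq p X, ent_eq p Y, (pr_eq_of_pr_prod hc h).1,
    (pr_eq_of_pr_prod hc h).2, infoNats]
  ring

lemma cmi_eq {δ : Type*} [Fintype δ] {p : γ → ℝ} {X : γ → α} {Y : γ → β} {Z : γ → δ}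
    {q : δ → ℝ} {P : δ → α → ℝ} {c : δ → α → β → ℝ} (hP : IsKernel P) (hc : ∀ z, IsKernel (c z))
    (h : pr p (fun a => (Z a, X a, Y a)) = jointLaw q fun z => jointLaw (P z) (c z)) :
    cmi p X Y Z = (mean q fun z => infoNats (P z) (c z)) / log 2 := by
  have hj : IsKernel fun z => jointLaw (P z) (c z) := fun z => (hP z).jointLaw (hc z)
  have ho : IsKernel fun z => outputLaw (P z) (c z) := fun z => (hP z).outputLaw (hc z)
  have hZX : pr p (fun a => (Z a, X a)) = jointLaw q P := pr_eq_iff.2 fun f => by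
    simpa only [mean_jointLaw, mean_const (hc _ _)] using pr_eq_iff.1 h fun x => f (x.1, x.2.1)
  have hZY : pr p (fun a => (Z a, Y a)) = jointLaw q fun z => outputLaw (P z) (c z) :=
    pr_eq_iff.2 fun f => by
      simpa only [mean_jointLaw, mean_outputLaw] using pr_eq_iff.1 h fun x => f (x.1, x.2.2)
  have hXZ := ent_equiv_comp p (fun a => (X a, Z a)) (Equiv.prodComm α δ)
  have hYZ := ent_equiv_comp p (fun a => (Y a, Z a)) (Equiv.prodComm β δ)
  have hXYZ := ent_equiv_comp p (fun a => (X a, Y a, Z a))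
    ((Equiv.prodAssoc α β δ).symm.trans (Equiv.prodComm (α × β) δ))
  simp only [Equiv.prodComm_apply, Prod.swap_prod_mk, Equiv.trans_apply,
    Equiv.prodAssoc_symm_apply] at hXZ hYZ hXYZ
  rw [cmi, ← hXZ, ← hYZ, ← hXYZ, ent_prod_eq hP hZX, ent_prod_eq ho hZY, ent_prod_eq hj h,
    ent_eq p Z, (pr_eq_of_pr_prod hP hZX).1]
  simp only [natEntropy_jointLaw _ (hc _), infoNats, mean_add, mean_sub]
  ring

end Entropy

section SingleLetter

lemma mean_jointZ (m : ℕ) (pW : Fin m → ℝ) (k : Fin m → X1 → ℝ) (p2 : X2 → ℝ)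
    (ch1 : X1 → Y1 → ℝ) (ch2 : X1 × X2 → Y2 → ℝ) (f : Fin m × X1 × X2 × Y1 × Y2 → ℝ) :
    mean (jointZ m pW k p2 ch1 ch2) f = mean pW fun w => mean (k w) fun x1 => mean p2 fun x2 =>
      mean (ch1 x1) fun y1 => mean (ch2 (x1, x2)) fun y2 => f (w, x1, x2, y1, y2) := by
  simp only [mean, jointZ, Fintype.sum_prod_type, mul_sum, mul_assoc]

variable {m : ℕ} {pW : Fin m → ℝ} {k : Fin m → X1 → ℝ} {p2 : X2 → ℝ} {ch1 : X1 → Y1 → ℝ}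
  {ch2 : X1 × X2 → Y2 → ℝ}

lemma mi_jointZ_X1_Y1 (hp2 : IsPMF p2) (hch1 : IsKernel ch1) (hch2 : IsKernel ch2) :
    mi (jointZ m pW k p2 ch1 ch2) (fun ω => ω.2.1) (fun ω => ω.2.2.2.1) =
      infoNats (outputLaw pW k) ch1 / log 2 := by
  refine mi_eq hch1 (pr_eq_iff.2 fun f => ?_)
  simp only [mean_jointZ, mean_jointLaw, mean_outputLaw, mean_const (hch2 _), mean_const hp2]

lemma mi_jointZ_WX2_Y2 (hk : IsKernel k) (hch1 : IsKernel ch1) (hch2 : IsKernel ch2) :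
    mi (jointZ m pW k p2 ch1 ch2) (fun ω => (ω.1, ω.2.2.1)) (fun ω => ω.2.2.2.2) =
      infoNats (jointLaw pW fun _ => p2)
        (fun v => outputLaw (k v.1) fun x => ch2 (x, v.2)) / log 2 := by
  refine mi_eq (fun v => (hk v.1).outputLaw fun x => hch2 (x, v.2)) (pr_eq_iff.2 fun f => ?_)
  simp only [mean_jointZ, mean_jointLaw, mean_outputLaw, mean_const (hch1 _), mean_comm p2]

lemma cmi_jointZ_X1_Y1_W (hk : IsKernel k) (hp2 : IsPMF p2) (hch1 : IsKernel ch1)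
    (hch2 : IsKernel ch2) :
    cmi (jointZ m pW k p2 ch1 ch2) (fun ω => ω.2.1) (fun ω => ω.2.2.2.1) (fun ω => ω.1) =
      (mean pW fun w => infoNats (k w) ch1) / log 2 := by
  refine cmi_eq hk (fun _ => hch1) (pr_eq_iff.2 fun f => ?_)
  simp only [mean_jointZ, mean_jointLaw, mean_const (hch2 _), mean_const hp2]

lemma entY2_eq (ch2 : X1 × X2 → Y2 → ℝ) (p1 : X1 → ℝ) (p2 : X2 → ℝ) :
    entY2 ch2 p1 p2 =
      natEntropy (outputLaw p1 fun x1 => outputLaw p2 fun x2 => ch2 (x1, x2)) / log 2 := by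
  rw [entY2, ent_eq]
  congr 2
  refine pr_eq_iff.2 fun f => ?_
  simp only [mean_outputLaw]
  simp only [mean, Fintype.sum_prod_type, mul_sum, mul_assoc]

lemma entY2n_eq {X : Type} (ch2 : X1 × X → Y2 → ℝ) (n : ℕ) (μ : (Fin n → X1) → ℝ)
    (x2 : Fin n → X) :
    entY2n ch2 n μ x2 =
      natEntropy (outputLaw μ fun x1 => prodLaw fun i => ch2 (x1 i, x2 i)) / log 2 := by
  rw [entY2n, ent_eq]
  congr 2
  refine pr_eq_iff.2 fun f => ?_
  rw [mean_outputLaw, ← mean_jointLaw μ _ fun x => f x.2]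
  rfl

lemma Cond1.natEntropy_outputLaw_prodLaw {X : Type} {ch2 : X1 × X → Y2 → ℝ} (hc1 : Cond1 ch2)
    {n : ℕ} {μ : (Fin n → X1) → ℝ} (hμ : IsPMF μ) (x2 x2' : Fin n → X) :
    natEntropy (outputLaw μ fun x1 => prodLaw fun i => ch2 (x1 i, x2 i)) =
      natEntropy (outputLaw μ fun x1 => prodLaw fun i => ch2 (x1 i, x2' i)) := by
  have h := hc1 n μ hμ x2 x2'
  rwa [entY2n_eq, entY2n_eq, div_left_inj' (log_pos one_lt_two).ne'] at h

lemma Cond1.natEntropy_outputLaw {X : Type} {ch2 : X1 × X → Y2 → ℝ} (hch2 : IsKernel ch2)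
    (hc1 : Cond1 ch2) {p1 : X1 → ℝ} (hp1 : IsPMF p1) (x2 x2' : X) :
    natEntropy (outputLaw p1 fun x1 => ch2 (x1, x2)) =
      natEntropy (outputLaw p1 fun x1 => ch2 (x1, x2')) := by
  have h := hc1.natEntropy_outputLaw_prodLaw (n := 1) (IsPMF.prodLaw fun _ => hp1)
    (fun _ => x2) fun _ => x2'
  rw [outputLaw_prodLaw (fun _ => p1) fun _ x1 => ch2 (x1, x2),
    outputLaw_prodLaw (fun _ => p1) fun _ x1 => ch2 (x1, x2'),
    natEntropy_prodLaw fun _ => hp1.outputLaw fun x1 => hch2 (x1, x2),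
    natEntropy_prodLaw fun _ => hp1.outputLaw fun x1 => hch2 (x1, x2')] at h
  simpa using h

lemma Cond2.natEntropy_outputLaw (hc2 : Cond2 ch2 p2) {p1 : X1 → ℝ} (hp1 : IsPMF p1) :
    natEntropy (outputLaw p1 fun x1 => outputLaw p2 fun x2 => ch2 (x1, x2)) =
      tau ch2 * log 2 := by
  rw [← hc2.2 p1 hp1, entY2_eq, div_mul_cancel₀ _ (log_pos one_lt_two).ne']

lemma natEntropy_outputLaw_le_tau (hch2 : IsKernel ch2) {p1 : X1 → ℝ} (hp1 : IsPMF p1)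
    (hp2 : IsPMF p2) :
    natEntropy (outputLaw p1 fun x1 => outputLaw p2 fun x2 => ch2 (x1, x2)) ≤
      tau ch2 * log 2 := by
  have hlog := log_pos one_lt_two
  rw [← div_le_iff₀ hlog, ← entY2_eq]
  refine le_csSup ⟨log (Fintype.card Y2) / log 2, ?_⟩ ⟨p1, p2, hp1, hp2, rfl⟩
  rintro _ ⟨q1, q2, hq1, hq2, rfl⟩
  rw [entY2_eq]
  gcongr
  exact natEntropy_le_log_card (hq1.outputLaw fun x1 => hq2.outputLaw fun x2 => hch2 (x1, x2))

lemma Cond2.infoNats_jointLaw {W : Type*} [Fintype W] {pW : W → ℝ} {k : W → X1 → ℝ}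
    (hc2 : Cond2 ch2 p2) (hpW : IsPMF pW) (hk : IsKernel k) :
    infoNats (jointLaw pW fun _ => p2) (fun v => outputLaw (k v.1) fun x => ch2 (x, v.2)) =
      tau ch2 * log 2 - mean pW fun w => mean p2 fun x2 =>
        natEntropy (outputLaw (k w) fun x => ch2 (x, x2)) := by
  have hout : outputLaw (jointLaw pW fun _ => p2) (fun v => outputLaw (k v.1) fun x => ch2 (x, v.2))
      = outputLaw (outputLaw pW k) fun x1 => outputLaw p2 fun x2 => ch2 (x1, x2) := by
    funext y
    rw [outputLaw, mean_jointLaw, outputLaw, mean_outputLaw]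
    exact congrArg _ (funext fun w => mean_comm p2 (k w) fun x2 x1 => ch2 (x1, x2) y)
  rw [infoNats, hout, hc2.natEntropy_outputLaw (hpW.outputLaw hk), mean_jointLaw]

lemma infoNats_eq_tau_sub (hch2 : IsKernel ch2) (hc1 : Cond1 ch2) (hc2 : Cond2 ch2 p2)
    (hpW : IsPMF pW) (hk : IsKernel k) (x0 : X2) :
    infoNats (jointLaw pW fun _ => p2) (fun v => outputLaw (k v.1) fun x => ch2 (x, v.2)) =
      tau ch2 * log 2 - mean pW fun w => natEntropy (outputLaw (k w) fun x => ch2 (x, x0)) := by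
  simp only [hc2.infoNats_jointLaw hpW hk, hc1.natEntropy_outputLaw hch2 (hk _) _ x0,
    mean_const hc2.1]

lemma Cond2.infoNats_jointLaw_eq_mean {W : Type*} [Fintype W] {pW : W → ℝ} {k : W → X1 → ℝ}
    (hc2 : Cond2 ch2 p2) (hpW : IsPMF pW) (hk : IsKernel k) :
    infoNats (jointLaw pW fun _ => p2) (fun v => outputLaw (k v.1) fun x => ch2 (x, v.2)) =
      mean pW fun w => infoNats p2 fun x2 => outputLaw (k w) fun x => ch2 (x, x2) := by
  have hout : ∀ w, natEntropy (outputLaw p2 fun x2 => outputLaw (k w) fun x => ch2 (x, x2)) =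
      tau ch2 * log 2 := fun w => by
    rw [← hc2.natEntropy_outputLaw (hk w)]
    exact congrArg natEntropy (funext fun y => mean_comm p2 (k w) fun x2 x1 => ch2 (x1, x2) y)
  rw [hc2.infoNats_jointLaw hpW hk]
  simp only [infoNats, hout, mean_sub, mean_const hpW]

end SingleLetter

/-- The probability that the decoder `g` does not recover the input of the channel `c` from its
output, when the input has law `p`. -/
noncomputable def decodeError {α β : Type*} [Fintype α] [Fintype β] (p : α → ℝ) (c : α → β → ℝ)
    (g : β → α) : ℝ :=
  mean p fun a => mean (c a) fun b => ind (g b ≠ a)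

section Fano

variable {α β γ : Type*} [Fintype α] [Fintype β] [Fintype γ]

lemma natEntropy_le_infoNats_add_mean_neg_log {p : α → ℝ} (hp : IsPMF p) {c : α → β → ℝ}
    (hc : IsKernel c) {σ : β → α → ℝ} (hσ : IsKernel σ) (hpos : ∀ b a, 0 < σ b a) :
    natEntropy p ≤ infoNats p c + mean p fun a => mean (c a) fun b => -log (σ b a) := by
  have hj := hp.jointLaw hc
  have ho := hp.outputLaw hc
  have hjo : ∀ x, 0 < jointLaw p c x → 0 < outputLaw p c x.2 := fun x => outputLaw_pos hp hc
  have hgibbs : natEntropy (jointLaw p c) ≤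
      mean (jointLaw p c) fun x => -log (outputLaw p c x.2 * σ x.2 x.1) := by
    refine natEntropy_le_mean_neg_log hj
      (fun x => mul_nonneg (ho.1 _) (hpos _ _).le) ?_
      (fun x hx => mul_pos (hjo x hx) (hpos _ _))
    simp only [Fintype.sum_prod_type_right, ← mul_sum, (hσ _).2, mul_one, ho.2, le_refl]
  have hsplit : mean (jointLaw p c) (fun x => -log (outputLaw p c x.2 * σ x.2 x.1)) =
      natEntropy (outputLaw p c) + mean p fun a => mean (c a) fun b => -log (σ b a) := by
    rw [natEntropy_eq_mean, mean_outputLaw, ← mean_jointLaw p c fun x => -log (outputLaw p c x.2),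
      ← mean_jointLaw p c fun x => -log (σ x.2 x.1), ← mean_add]
    exact mean_congr hj fun x hx => by
      rw [log_mul (hjo x hx).ne' (hpos _ _).ne', neg_add]
  rw [natEntropy_jointLaw p hc] at hgibbs
  rw [infoNats]
  linarith

lemma natEntropy_le_infoNats_add_decodeError {p : α → ℝ} (hp : IsPMF p) {c : α → β → ℝ}
    (hc : IsKernel c) (g : β → α) :
    natEntropy p ≤ infoNats p c + log 2 + decodeError p c g * log (Fintype.card α) := by
  have := hp.nonempty
  obtain ⟨K, hKdef⟩ : ∃ K : ℝ, K = Fintype.card α := ⟨_, rfl⟩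
  have hK : 0 < K := hKdef ▸ Nat.cast_pos.2 Fintype.card_pos
  rw [← hKdef]
  -- guess `g b` with probability one half, otherwise a uniformly chosen symbol
  let σ : β → α → ℝ := fun b a => ind (g b = a) / 2 + 1 / (2 * K)
  have hpos : ∀ b a, 0 < σ b a := fun b a =>
    add_pos_of_nonneg_of_pos (div_nonneg (ind_nonneg _) two_pos.le) (by positivity)
  have hσ : IsKernel σ := fun b => ⟨fun a => (hpos b a).le, by
    simp only [σ, sum_add_distrib, ← sum_div, ind, sum_ite_eq, mem_univ, if_true, sum_const,
      card_univ, nsmul_eq_mul, ← hKdef]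
    field_simp
    norm_num⟩
  have hlog : ∀ b a, -log (σ b a) ≤ log 2 + ind (g b ≠ a) * log K := fun b a => by
    rw [← log_inv]
    by_cases h : g b = a
    · rw [ind_false (not_not.2 h), zero_mul, add_zero]
      refine log_le_log (inv_pos.2 (hpos b a)) (inv_le_of_inv_le₀ two_pos ?_)
      simp only [σ, ind_true h, ← one_div, le_add_iff_nonneg_right]
      positivity
    · simp only [σ, ind_false h, ind_true h, zero_div, zero_add, one_mul, one_div, inv_inv]
      exact (log_mul two_ne_zero hK.ne').le
  calc natEntropy p ≤ infoNats p c + mean p fun a => mean (c a) fun b => -log (σ b a) :=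
        natEntropy_le_infoNats_add_mean_neg_log hp hc hσ hpos
    _ ≤ infoNats p c + mean p fun a => mean (c a) fun b => log 2 + ind (g b ≠ a) * log K := by
        gcongr
        exact mean_mono hp fun a _ => mean_mono (hc a) fun b _ => hlog b a
    _ = infoNats p c + log 2 + decodeError p c g * log K := by
        simp only [mean_add, mean_const (hc _), mean_const hp, mean_mul_const, decodeError,
          add_assoc]

end Fano

/-- The error probability of a code for a Z-interference channel used once, with message laws
`P1` and `P2`: receiver 1 observes `ch1 (f1 u)`, receiver 2 observes `ch2 (f1 u, f2 t)` and
`h u`. -/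
noncomputable def errorProb {U V T A B Y Z : Type*} [Fintype U] [Fintype T] [Fintype Y] [Fintype Z]
    (P1 : U → ℝ) (P2 : T → ℝ) (ch1 : A → Y → ℝ) (ch2 : A × B → Z → ℝ) (h : U → V)
    (f1 : U → A) (f2 : T → B) (g1 : Y → U) (g2 : Z → V → T) : ℝ :=
  mean P1 fun u => mean P2 fun t => mean (ch1 (f1 u)) fun y => mean (ch2 (f1 u, f2 t)) fun z =>
    ind (¬(g1 y = u ∧ g2 z (h u) = t))

lemma PerrZDet_eq_errorProb {A B V : Type} (ch1 : A → Y1 → ℝ) (ch2 : A × B → Y2 → ℝ)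
    (pU1 : U1 → ℝ) (h1 : U1 → V) (pU2 : U2 → ℝ) (n : ℕ)
    (f1 : (Fin n → U1) → Fin n → A) (f2 : (Fin n → U2) → Fin n → B)
    (g1 : (Fin n → Y1) → Fin n → U1) (g2 : (Fin n → Y2) → (Fin n → V) → Fin n → U2) :
    PerrZDet ch1 ch2 pU1 h1 pU2 n f1 f2 g1 g2 =
      errorProb (prodLaw fun _ => pU1) (prodLaw fun _ => pU2) (fun x => prodLaw fun i => ch1 (x i))
        (fun x : (Fin n → A) × (Fin n → B) => prodLaw fun i => ch2 (x.1 i, x.2 i))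
        (fun u i => h1 (u i)) f1 f2 g1 g2 := by
  simp only [PerrZDet, errorProb, mean, prodLaw, ind_not, mul_sum, mul_assoc]

section ErrorProb

variable {U V T A B Y Z : Type*} [Fintype U] [Fintype T] [Fintype Y] [Fintype Z]
  {P1 : U → ℝ} {P2 : T → ℝ} {ch1 : A → Y → ℝ} {ch2 : A × B → Z → ℝ} {h : U → V}
  {f1 : U → A} {f2 : T → B} {g1 : Y → U} {g2 : Z → V → T} {q : V → ℝ} {ρ : V → U → ℝ}

lemma errorProb_nonneg (hP1 : IsPMF P1) (hP2 : IsPMF P2) (hch1 : IsKernel ch1)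
    (hch2 : IsKernel ch2) : 0 ≤ errorProb P1 P2 ch1 ch2 h f1 f2 g1 g2 :=
  mean_nonneg hP1 fun _ => mean_nonneg hP2 fun _ => mean_nonneg (hch1 _) fun _ =>
    mean_nonneg (hch2 _) fun _ => ind_nonneg _

lemma errorProb_le_add (hP1 : IsPMF P1) (hP2 : IsPMF P2) (hch1 : IsKernel ch1)
    (hch2 : IsKernel ch2) :
    errorProb P1 P2 ch1 ch2 h f1 f2 g1 g2 ≤ decodeError P1 (fun u => ch1 (f1 u)) g1 +
      mean P1 fun u => decodeError P2 (fun t => ch2 (f1 u, f2 t)) fun z => g2 z (h u) := by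
  calc errorProb P1 P2 ch1 ch2 h f1 f2 g1 g2
      ≤ mean P1 fun u => mean P2 fun t => mean (ch1 (f1 u)) fun y =>
          mean (ch2 (f1 u, f2 t)) fun z => ind (g1 y ≠ u) + ind (g2 z (h u) ≠ t) :=
        mean_mono hP1 fun _ _ => mean_mono hP2 fun _ _ => mean_mono (hch1 _) fun _ _ =>
          mean_mono (hch2 _) fun _ _ => by rw [not_and_or]; exact ind_or_le _ _
    _ = _ := by
        simp only [mean_add, mean_const hP2, mean_const (hch1 _), mean_const (hch2 _), decodeError]

lemma decodeError_fst_le_errorProb (hP1 : IsPMF P1) (hP2 : IsPMF P2) (hch1 : IsKernel ch1)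
    (hch2 : IsKernel ch2) :
    decodeError P1 (fun u => ch1 (f1 u)) g1 ≤ errorProb P1 P2 ch1 ch2 h f1 f2 g1 g2 := by
  calc decodeError P1 (fun u => ch1 (f1 u)) g1
      = mean P1 fun u => mean P2 fun t => mean (ch1 (f1 u)) fun y =>
          mean (ch2 (f1 u, f2 t)) fun _ => ind (g1 y ≠ u) := by
        simp only [mean_const hP2, mean_const (hch2 _), decodeError]
    _ ≤ errorProb P1 P2 ch1 ch2 h f1 f2 g1 g2 := mean_mono hP1 fun _ _ => mean_mono hP2 fun _ _ =>
        mean_mono (hch1 _) fun _ _ => mean_mono (hch2 _) fun _ _ =>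
          ind_mono fun hne hand => hne hand.1

lemma mean_decodeError_snd_le_errorProb (hP1 : IsPMF P1) (hP2 : IsPMF P2) (hch1 : IsKernel ch1)
    (hch2 : IsKernel ch2) :
    (mean P1 fun u => decodeError P2 (fun t => ch2 (f1 u, f2 t)) fun z => g2 z (h u)) ≤
      errorProb P1 P2 ch1 ch2 h f1 f2 g1 g2 := by
  calc (mean P1 fun u => decodeError P2 (fun t => ch2 (f1 u, f2 t)) fun z => g2 z (h u))
      = mean P1 fun u => mean P2 fun t => mean (ch1 (f1 u)) fun _ =>
          mean (ch2 (f1 u, f2 t)) fun z => ind (g2 z (h u) ≠ t) := by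
        simp only [mean_const (hch1 _), decodeError]
    _ ≤ errorProb P1 P2 ch1 ch2 h f1 f2 g1 g2 := mean_mono hP1 fun _ _ => mean_mono hP2 fun _ _ =>
        mean_mono (hch1 _) fun _ _ => mean_mono (hch2 _) fun _ _ =>
          ind_mono fun hne hand => hne hand.2

lemma natEntropy_fst_le_infoNats_add (hP1 : IsPMF P1) (hP2 : IsPMF P2) (hch1 : IsKernel ch1)
    (hch2 : IsKernel ch2) :
    natEntropy P1 ≤ infoNats P1 (fun u => ch1 (f1 u)) + log 2 +
      errorProb P1 P2 ch1 ch2 h f1 f2 g1 g2 * log (Fintype.card U) := by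
  refine (natEntropy_le_infoNats_add_decodeError hP1 (fun u => hch1 (f1 u)) g1).trans ?_
  gcongr
  exact decodeError_fst_le_errorProb hP1 hP2 hch1 hch2

variable [Fintype V]

lemma mean_natEntropy_fst_le_mean_infoNats_add (hP1 : IsPMF P1) (hP2 : IsPMF P2)
    (hch1 : IsKernel ch1) (hch2 : IsKernel ch2) (hq : IsPMF q) (hρ : IsKernel ρ)
    (hdis : pr P1 (fun u => (h u, u)) = jointLaw q ρ) :
    (mean q fun v => natEntropy (ρ v)) ≤
      (mean q fun v => infoNats (ρ v) fun u => ch1 (f1 u)) + log 2 +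
        errorProb P1 P2 ch1 ch2 h f1 f2 g1 g2 * log (Fintype.card U) := by
  have hmix : (mean q fun v => decodeError (ρ v) (fun u => ch1 (f1 u)) g1) =
      decodeError P1 (fun u => ch1 (f1 u)) g1 := by
    have := pr_eq_iff.1 hdis fun x => mean (ch1 (f1 x.2)) fun y => ind (g1 y ≠ x.2)
    rw [mean_jointLaw] at this
    exact this.symm
  have hfano := mean_mono hq fun v _ =>
    natEntropy_le_infoNats_add_decodeError (hρ v) (fun u => hch1 (f1 u)) g1
  simp only [mean_add, mean_const hq, mean_mul_const, hmix] at hfano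
  refine hfano.trans ?_
  gcongr
  exact decodeError_fst_le_errorProb hP1 hP2 hch1 hch2

lemma natEntropy_snd_le_mean_infoNats_add (hP1 : IsPMF P1) (hP2 : IsPMF P2)
    (hch1 : IsKernel ch1) (hch2 : IsKernel ch2) (hq : IsPMF q) (hρ : IsKernel ρ)
    (hdis : pr P1 (fun u => (h u, u)) = jointLaw q ρ) :
    natEntropy P2 ≤
      (mean q fun v => infoNats P2 fun t => outputLaw (ρ v) fun u => ch2 (f1 u, f2 t)) + log 2 +
        errorProb P1 P2 ch1 ch2 h f1 f2 g1 g2 * log (Fintype.card T) := by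
  have hmix : (mean q fun v => decodeError P2 (fun t => outputLaw (ρ v) fun u => ch2 (f1 u, f2 t))
      fun z => g2 z v) =
      mean P1 fun u => decodeError P2 (fun t => ch2 (f1 u, f2 t)) fun z => g2 z (h u) := by
    have := pr_eq_iff.1 hdis fun x =>
      decodeError P2 (fun t => ch2 (f1 x.2, f2 t)) fun z => g2 z x.1
    rw [this, mean_jointLaw]
    simp only [decodeError, mean_outputLaw, mean_comm P2]
  have hfano := mean_mono hq fun v _ => natEntropy_le_infoNats_add_decodeError hP2
    (fun t => (hρ v).outputLaw fun u => hch2 (f1 u, f2 t)) fun z => g2 z v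
  simp only [mean_add, mean_const hq, mean_mul_const, hmix] at hfano
  refine hfano.trans ?_
  gcongr
  exact mean_decodeError_snd_le_errorProb hP1 hP2 hch1 hch2

end ErrorProb

lemma isPMF_ind_eq {α : Type*} [Fintype α] (a : α) : IsPMF fun x => ind (x = a) :=
  ⟨fun _ => ind_nonneg _, by simp [ind]⟩

lemma natEntropy_eq_zero {α : Type*} [Fintype α] [Subsingleton α] {p : α → ℝ} (hp : IsPMF p) :
    natEntropy p = 0 := by
  have := hp.nonempty
  have hcard : Fintype.card α = 1 :=
    le_antisymm (Fintype.card_le_one_iff_subsingleton.2 ‹_›) Fintype.card_pos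
  refine le_antisymm ?_ (natEntropy_nonneg hp)
  simpa only [hcard, Nat.cast_one, log_one] using natEntropy_le_log_card hp

section Posterior

variable {α β γ δ : Type*} [Fintype α] [Fintype β] [Fintype γ] [Fintype δ]

/-- `κ` is the law of `X` given the output of the channel `c`, when the input of `c` has law `p`. -/
def IsPosterior (p : α → ℝ) (c : α → β → ℝ) (X : α → γ) (κ : β → γ → ℝ) : Prop :=
  IsKernel κ ∧ ∀ F : β → γ → ℝ,
    (mean p fun a => mean (c a) fun b => F b (X a)) = mean (outputLaw p c) fun b => mean (κ b) (F b)

lemma exists_isPosterior {p : α → ℝ} (hp : IsPMF p) {c : α → β → ℝ} (hc : IsKernel c) (X : α → γ) :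
    ∃ κ, IsPosterior p c X κ := by
  obtain ⟨κ, hκ, h⟩ := exists_disintegration (hp.jointLaw hc) Prod.snd fun x => X x.1
  have hout : pr (jointLaw p c) Prod.snd = outputLaw p c := pr_eq_iff.2 fun f => by
    rw [mean_jointLaw, mean_outputLaw]
  rw [hout, pr_eq_iff] at h
  refine ⟨κ, hκ, fun F => ?_⟩
  simpa only [mean_jointLaw] using h fun x => F x.1 x.2

variable {p : α → ℝ} {c : α → β → ℝ} {X : α → γ} {κ : β → γ → ℝ} {d : γ → δ → ℝ}

lemma IsPosterior.mean_mean (h : IsPosterior p c X κ) (hc : IsKernel c) (f : γ → ℝ) :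
    (mean (outputLaw p c) fun b => mean (κ b) f) = mean p fun a => f (X a) := by
  simpa only [mean_const (hc _)] using (h.2 fun _ => f).symm

lemma IsPosterior.outputLaw_outputLaw {ε : Type*} {d : γ → ε → ℝ} (h : IsPosterior p c X κ)
    (hc : IsKernel c) :
    (outputLaw (outputLaw p c) fun b => outputLaw (κ b) d) = outputLaw p fun a => d (X a) :=
  funext fun z => h.mean_mean hc fun x => d x z

lemma IsPosterior.natEntropy_outputLaw_prod (h : IsPosterior p c X κ) (hd : IsKernel d) :
    natEntropy (outputLaw p fun a => jointLaw (c a) fun _ => d (X a)) =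
      natEntropy (outputLaw p c) +
        mean (outputLaw p c) fun b => natEntropy (outputLaw (κ b) d) := by
  have hlaw : outputLaw p (fun a => jointLaw (c a) fun _ => d (X a)) =
      jointLaw (outputLaw p c) fun b => outputLaw (κ b) d := funext fun ⟨b, z⟩ => by
    have := h.2 fun b' x => ind (b' = b) * d x z
    simp only [mean_const_mul, mean_ind_eq_mul] at this
    exact this
  rw [hlaw, natEntropy_jointLaw _ fun b => IsPMF.outputLaw (h.1 b) hd]

end Posterior

section EntropyRegion

open scoped Pointwise

variable {A Y Z : Type*} [Fintype A] [Fintype Y] [Fintype Z] {cY : A → Y → ℝ} {cZ : A → Z → ℝ}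

/-- The point recording an input law and the entropies it induces at the outputs of `cY`
and `cZ`. -/
noncomputable def entropyPoint (cY : A → Y → ℝ) (cZ : A → Z → ℝ) (p : A → ℝ) : (A → ℝ) × ℝ × ℝ :=
  (p, natEntropy (outputLaw p cY), natEntropy (outputLaw p cZ))

/-- All points `(∑ w, P w • k w, H(Y|W), H(Z|W))` with `W ~ P` a finite auxiliary variable,
`k w` the law of the input given `W = w`, and `Y`, `Z` the outputs of `cY` and `cZ`. -/
def entropyRegion (cY : A → Y → ℝ) (cZ : A → Z → ℝ) : Set ((A → ℝ) × ℝ × ℝ) :=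
  convexHull ℝ (entropyPoint cY cZ '' {p | IsPMF p})

/-- The region `entropyRegion`, enlarged by simultaneous equal increases of both entropies. -/
def entropyRegionUp (cY : A → Y → ℝ) (cZ : A → Z → ℝ) : Set ((A → ℝ) × ℝ × ℝ) :=
  entropyRegion cY cZ + (fun t : ℝ => t • ((0 : A → ℝ), (1 : ℝ), (1 : ℝ))) '' Set.Ici 0

/-- The sum of the one-letter marginals of the block law `μ`, together with the entropies of the
output blocks of the memoryless channels `cY` and `cZ`. -/
noncomputable def blockPoint (cY : A → Y → ℝ) (cZ : A → Z → ℝ) {n : ℕ} (μ : (Fin n → A) → ℝ) :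
    (A → ℝ) × ℝ × ℝ :=
  (∑ i, pr μ fun x => x i, natEntropy (outputLaw μ fun x => prodLaw fun i => cY (x i)),
    natEntropy (outputLaw μ fun x => prodLaw fun i => cZ (x i)))

lemma convex_entropyRegionUp : Convex ℝ (entropyRegionUp cY cZ) :=
  (convex_convexHull ℝ _).add <| (convex_Ici (0 : ℝ)).linear_image
    (LinearMap.toSpanSingleton ℝ ((A → ℝ) × ℝ × ℝ) (0, 1, 1))

lemma entropyPoint_add_smul_mem_entropyRegionUp {β : Type*} [Fintype β] {q : β → ℝ}
    (hq : IsPMF q) {κ : β → A → ℝ} (hκ : IsKernel κ) {t : ℝ} (ht : 0 ≤ t) :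
    ∑ b, q b • entropyPoint cY cZ (κ b) + t • ((0 : A → ℝ), (1 : ℝ), (1 : ℝ)) ∈
      entropyRegionUp cY cZ :=
  Set.add_mem_add ((convex_convexHull ℝ _).sum_mem (fun b _ => hq.1 b) hq.2 fun b _ =>
    subset_convexHull ℝ _ ⟨κ b, hκ b, rfl⟩) ⟨t, ht, rfl⟩

lemma natEntropy_outputLaw_prodLaw_succ {n : ℕ} (μ : (Fin (n + 1) → A) → ℝ) (c : A → Y → ℝ) :
    natEntropy (outputLaw μ fun x => prodLaw fun i => c (x i)) =
      natEntropy (outputLaw μ fun x =>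
        jointLaw (c (x 0)) fun _ => prodLaw fun i => c (Fin.tail x i)) := by
  rw [← natEntropy_comp_equiv (Fin.consEquiv fun _ => Y)]
  congr 1
  funext ⟨y0, y⟩
  simp [outputLaw, jointLaw, prodLaw, Fin.prod_univ_succ, Fin.consEquiv, Fin.tail]

lemma natEntropy_outputLaw_jointLaw_swap {B : Type*} [Fintype B] (μ : B → ℝ) (c : B → Y → ℝ)
    (d : B → Z → ℝ) :
    natEntropy (outputLaw μ fun x => jointLaw (c x) fun _ => d x) =
      natEntropy (outputLaw μ fun x => jointLaw (d x) fun _ => c x) := by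
  rw [← natEntropy_comp_equiv (Equiv.prodComm Y Z)]
  congr 1
  funext ⟨y, z⟩
  simp [outputLaw, jointLaw, mul_comm]

section LetterPeeling

variable {n : ℕ} {μ : (Fin (n + 1) → A) → ℝ} {κ : (Fin n → Z) → A → ℝ}
  {κ' : Y → (Fin n → A) → ℝ}

lemma sum_pr_succ (hcY : IsKernel cY) (hcZ : IsKernel cZ)
    (hκ : IsPosterior μ (fun x => prodLaw fun i => cZ (Fin.tail x i)) (fun x => x 0) κ)
    (hκ' : IsPosterior μ (fun x => cY (x 0)) Fin.tail κ') :
    ∑ i, pr μ (fun x => x i) =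
      ∑ z, outputLaw μ (fun x => prodLaw fun i => cZ (Fin.tail x i)) z • κ z +
        ∑ y, outputLaw μ (fun x => cY (x 0)) y • ∑ i, pr (κ' y) fun x => x i := by
  have hzero : ∀ a, pr μ (fun x => x 0) a = _ := fun a => (pr_eq_mean μ _ a).trans
    (hκ.mean_mean (fun x => IsKernel.prodLaw (fun _ => hcZ) (Fin.tail x)) fun x => ind (x = a)).symm
  have hsucc : ∀ (i : Fin n) a, pr μ (fun x => x i.succ) a = _ := fun i a =>
    (pr_eq_mean μ _ a).trans (hκ'.mean_mean (fun x => hcY (x 0)) fun x => ind (x i = a)).symm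
  funext a
  simp only [Fin.sum_univ_succ, Pi.add_apply, Finset.sum_apply, Pi.smul_apply, hzero, hsucc,
    mean_ind_eq, ← mean_finset_sum, ← pr_eq_mean]
  rfl

lemma natEntropy_outputLaw_prodLaw_succ_fst (hcY : IsKernel cY) (hcZ : IsKernel cZ)
    (hκ : IsPosterior μ (fun x => prodLaw fun i => cZ (Fin.tail x i)) (fun x => x 0) κ)
    (hκ' : IsPosterior μ (fun x => cY (x 0)) Fin.tail κ') :
    natEntropy (outputLaw μ fun x => prodLaw fun i => cY (x i)) =
      (mean (outputLaw μ fun x => prodLaw fun i => cZ (Fin.tail x i)) fun z =>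
          natEntropy (outputLaw (κ z) cY)) +
        infoNats (outputLaw μ fun x => cY (x 0))
          (fun y => outputLaw (κ' y) fun x => prodLaw fun i => cZ (x i)) +
        mean (outputLaw μ fun x => cY (x 0)) fun y =>
          natEntropy (outputLaw (κ' y) fun x => prodLaw fun i => cY (x i)) := by
  have hchain := hκ'.natEntropy_outputLaw_prod (IsKernel.prodLaw fun _ : Fin n => hcY)
  have hcross := hκ.natEntropy_outputLaw_prod hcY
  rw [natEntropy_outputLaw_jointLaw_swap,
    hκ'.natEntropy_outputLaw_prod (IsKernel.prodLaw fun _ : Fin n => hcZ)] at hcross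
  rw [← natEntropy_outputLaw_prodLaw_succ μ cY] at hchain
  rw [infoNats, hκ'.outputLaw_outputLaw (fun x => hcY (x 0))]
  linarith

lemma natEntropy_outputLaw_prodLaw_succ_snd (hcY : IsKernel cY) (hcZ : IsKernel cZ)
    (hκ : IsPosterior μ (fun x => prodLaw fun i => cZ (Fin.tail x i)) (fun x => x 0) κ)
    (hκ' : IsPosterior μ (fun x => cY (x 0)) Fin.tail κ') :
    natEntropy (outputLaw μ fun x => prodLaw fun i => cZ (x i)) =
      (mean (outputLaw μ fun x => prodLaw fun i => cZ (Fin.tail x i)) fun z =>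
          natEntropy (outputLaw (κ z) cZ)) +
        infoNats (outputLaw μ fun x => cY (x 0))
          (fun y => outputLaw (κ' y) fun x => prodLaw fun i => cZ (x i)) +
        mean (outputLaw μ fun x => cY (x 0)) fun y =>
          natEntropy (outputLaw (κ' y) fun x => prodLaw fun i => cZ (x i)) := by
  have hchain := hκ.natEntropy_outputLaw_prod hcZ
  rw [natEntropy_outputLaw_jointLaw_swap, ← natEntropy_outputLaw_prodLaw_succ μ cZ] at hchain
  rw [infoNats, hκ'.outputLaw_outputLaw (fun x => hcY (x 0))]
  linarith

/-- Conditioning the first letter on the remaining `Z` outputs, and the remaining letters on the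
first `Y` output, changes both block entropies by the same amount, the mutual information between
these two conditioning variables. -/
lemma blockPoint_succ (hcY : IsKernel cY) (hcZ : IsKernel cZ)
    (hκ : IsPosterior μ (fun x => prodLaw fun i => cZ (Fin.tail x i)) (fun x => x 0) κ)
    (hκ' : IsPosterior μ (fun x => cY (x 0)) Fin.tail κ') :
    blockPoint cY cZ μ =
      ∑ z, outputLaw μ (fun x => prodLaw fun i => cZ (Fin.tail x i)) z • entropyPoint cY cZ (κ z) +
        infoNats (outputLaw μ fun x => cY (x 0))
          (fun y => outputLaw (κ' y) fun x => prodLaw fun i => cZ (x i)) •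
            ((0 : A → ℝ), (1 : ℝ), (1 : ℝ)) +
        ∑ y, outputLaw μ (fun x => cY (x 0)) y • blockPoint cY cZ (κ' y) := by
  refine Prod.ext ?_ (Prod.ext ?_ ?_)
  · simpa [blockPoint, entropyPoint, Prod.fst_sum] using sum_pr_succ hcY hcZ hκ hκ'
  · simpa [blockPoint, entropyPoint, Prod.fst_sum, Prod.snd_sum, mean] using
      natEntropy_outputLaw_prodLaw_succ_fst hcY hcZ hκ hκ'
  · simpa [blockPoint, entropyPoint, Prod.snd_sum, mean] using
      natEntropy_outputLaw_prodLaw_succ_snd hcY hcZ hκ hκ'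

end LetterPeeling

lemma blockPoint_mem [Nonempty A] (hcY : IsKernel cY) (hcZ : IsKernel cZ) {n : ℕ}
    {μ : (Fin n → A) → ℝ} (hμ : IsPMF μ) :
    blockPoint cY cZ μ ∈ (n : ℝ) • entropyRegionUp cY cZ := by
  induction n with
  | zero =>
    obtain ⟨a⟩ := ‹Nonempty A›
    have hne : (entropyRegionUp cY cZ).Nonempty := ⟨_, entropyPoint_add_smul_mem_entropyRegionUp
      (isPMF_ind_eq a) (fun _ : A => isPMF_ind_eq a) le_rfl⟩
    rw [Nat.cast_zero, Set.zero_smul_set hne, blockPoint,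
      natEntropy_eq_zero (hμ.outputLaw (IsKernel.prodLaw fun _ => hcY)),
      natEntropy_eq_zero (hμ.outputLaw (IsKernel.prodLaw fun _ => hcZ)), Finset.univ_eq_empty,
      Finset.sum_empty]
    rfl
  | succ n ih =>
    have hcZn := fun n => IsKernel.prodLaw fun _ : Fin n => hcZ
    obtain ⟨κ, hκ⟩ := exists_isPosterior hμ (fun x => hcZn n (Fin.tail x)) fun x => x 0
    obtain ⟨κ', hκ'⟩ := exists_isPosterior hμ (fun x => hcY (x 0)) Fin.tail
    have hY0 : IsPMF (outputLaw μ fun x => cY (x 0)) := hμ.outputLaw fun x => hcY (x 0)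
    rw [blockPoint_succ hcY hcZ hκ hκ', Nat.cast_succ, add_comm (n : ℝ),
      convex_entropyRegionUp.add_smul zero_le_one n.cast_nonneg, one_smul]
    refine Set.add_mem_add (entropyPoint_add_smul_mem_entropyRegionUp
      (hμ.outputLaw fun x => hcZn n (Fin.tail x)) hκ.1
      (infoNats_nonneg hY0 fun y => (hκ'.1 y).outputLaw (hcZn n))) ?_
    exact (convex_entropyRegionUp.smul _).sum_mem (fun y _ => hY0.1 y) hY0.2
      fun y _ => ih (hκ'.1 y)

end EntropyRegion

section ConvexHull

variable {E : Type*} [NormedAddCommGroup E] [NormedSpace ℝ E] [FiniteDimensional ℝ E] {s : Set E}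

/-- Carathéodory's theorem, as a parametrization of the convex hull by finitely many products of
a simplex with a power of `s`. -/
lemma convexHull_eq_iUnion_image (s : Set E) :
    convexHull ℝ s = ⋃ d ∈ Set.Iic (Module.finrank ℝ E + 1),
      (fun v : (Fin d → ℝ) × (Fin d → E) => ∑ i, v.1 i • v.2 i) ''
        (stdSimplex ℝ (Fin d) ×ˢ Set.univ.pi fun _ => s) := by
  refine Set.Subset.antisymm (fun x hx => ?_) (Set.iUnion₂_subset fun d _ => ?_)
  · obtain ⟨ι, _, z, w, hz, hind, hw, hw1, rfl⟩ := eq_pos_convex_span_of_mem_convexHull hx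
    have e := Fintype.equivFin ι
    have hcard : Fintype.card ι ≤ Module.finrank ℝ E + 1 :=
      hind.card_le_finrank_succ.trans (Nat.succ_le_succ (Submodule.finrank_le _))
    refine Set.mem_biUnion (Set.mem_Iic.2 hcard) ⟨(w ∘ e.symm, z ∘ e.symm), ⟨⟨fun i =>
      (hw _).le, (e.symm.sum_comp w).trans hw1⟩, fun i _ => hz ⟨_, rfl⟩⟩, ?_⟩
    exact e.symm.sum_comp fun i => w i • z i
  · rintro _ ⟨v, ⟨hv, hvs⟩, rfl⟩
    exact (convex_convexHull ℝ s).sum_mem (fun i _ => hv.1 i) hv.2 fun i _ =>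
      subset_convexHull ℝ s (hvs i (Set.mem_univ i))

lemma isCompact_convexHull (hs : IsCompact s) : IsCompact (convexHull ℝ s) := by
  rw [convexHull_eq_iUnion_image]
  exact (Set.finite_Iic _).isCompact_biUnion fun d _ =>
    ((isCompact_stdSimplex ℝ (Fin d)).prod (isCompact_univ_pi fun _ => hs)).image (by fun_prop)

end ConvexHull

section BlockInformation

variable {α β γ δ : Type*} [Fintype α] [Fintype β] [Fintype γ]

lemma outputLaw_pr (p : α → ℝ) (X : α → β) (c : β → δ → ℝ) :
    outputLaw (pr p X) c = outputLaw p fun a => c (X a) :=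
  funext fun _ => mean_pr p X _

lemma pr_outputLaw (p : α → ℝ) (c : α → β → ℝ) (Y : β → δ) :
    pr (outputLaw p c) Y = outputLaw p fun a => pr (c a) Y := funext fun y => by
  simp only [pr_eq_mean, mean_outputLaw, outputLaw]

lemma pr_prodLaw_apply {ι : Type*} [Fintype ι] [DecidableEq ι] {p : ι → α → ℝ}
    (hp : ∀ i, IsPMF (p i)) (i : ι) : pr (prodLaw p) (fun x => x i) = p i :=
  funext fun a => by rw [pr_eq_mean, mean_prodLaw_apply hp i fun x => ind (x = a), mean_ind_eq]

lemma sum_natEntropy_le {n : ℕ} {q : Fin n → α → ℝ} (hq : IsKernel q) {p : α → ℝ}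
    (hp : (n : ℝ) • p = ∑ i, q i) : ∑ i, natEntropy (q i) ≤ n * natEntropy p := by
  rcases n.eq_zero_or_pos with rfl | hn
  · simp
  have hn' : (n : ℝ) ≠ 0 := by positivity
  have huniform : IsPMF fun _ : Fin n => (n : ℝ)⁻¹ := ⟨fun _ => by positivity, by simp [hn']⟩
  have hout : outputLaw (fun _ => (n : ℝ)⁻¹) q = p := funext fun a => by
    have := congrFun hp a
    simp only [Pi.smul_apply, Finset.sum_apply, smul_eq_mul] at this
    rw [outputLaw, mean, ← Finset.mul_sum, ← this, inv_mul_cancel_left₀ hn']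
  have hle := infoNats_nonneg huniform hq
  rw [infoNats, hout, mean, ← Finset.mul_sum, sub_nonneg] at hle
  rwa [inv_mul_le_iff₀ (by positivity)] at hle

lemma natEntropy_outputLaw_prodLaw_le {n : ℕ} {p : α → ℝ} (hp : IsPMF p)
    {c : α → Fin n → β → ℝ} (hc : ∀ a, IsKernel (c a)) :
    natEntropy (outputLaw p fun a => prodLaw (c a)) ≤
      ∑ i, natEntropy (outputLaw p fun a => c a i) := by
  refine (natEntropy_le_sum_natEntropy_pr (hp.outputLaw fun a => IsPMF.prodLaw (hc a))).trans_eq ?_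
  simp only [pr_outputLaw, pr_prodLaw_apply (hc _)]

lemma mean_natEntropy_prodLaw {n : ℕ} {p : α → ℝ} {c : α → Fin n → β → ℝ}
    (hc : ∀ a, IsKernel (c a)) :
    (mean p fun a => natEntropy (prodLaw (c a))) = ∑ i, mean p fun a => natEntropy (c a i) := by
  simp only [natEntropy_prodLaw (hc _), mean_finset_sum]

lemma infoNats_prodLaw_le {n : ℕ} {P : α → ℝ} (hP : IsPMF P) (f : α → Fin n → β) {c : β → γ → ℝ}
    (hc : IsKernel c) {p : β → ℝ} (hp : (n : ℝ) • p = ∑ i, pr P fun a => f a i) :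
    infoNats P (fun a => prodLaw fun i => c (f a i)) ≤ n * infoNats p c := by
  have hmean : (∑ i, mean P fun a => natEntropy (c (f a i))) =
      n * mean p fun b => natEntropy (c b) := by
    rw [← mean_smul_left, hp, mean_finset_sum_left]
    simp only [mean_pr]
  have hout : (n : ℝ) • outputLaw p c = ∑ i, outputLaw P fun a => c (f a i) := funext fun y => by
    rw [Finset.sum_apply, Pi.smul_apply, smul_eq_mul, outputLaw, ← mean_smul_left, hp,
      mean_finset_sum_left]
    simp only [mean_pr, outputLaw]
  rw [infoNats, infoNats, mul_sub, mean_natEntropy_prodLaw fun a i => hc (f a i), hmean]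
  exact sub_le_sub_right ((natEntropy_outputLaw_prodLaw_le hP fun a i => hc (f a i)).trans
    (sum_natEntropy_le (fun i => hP.outputLaw fun a => hc (f a i)) hout)) _

lemma pr_prodLaw_prod {n : ℕ} {p : α → ℝ} {h : α → β} {q : β → ℝ} {ρ : β → α → ℝ}
    (hdis : pr p (fun a => (h a, a)) = jointLaw q ρ) :
    pr (prodLaw fun _ : Fin n => p) (fun x => (fun i => h (x i), x)) =
      jointLaw (prodLaw fun _ => q) fun v => prodLaw fun i => ρ (v i) := by
  have hblock := pr_eq_iff.1 (pr_prodLaw (X := fun (_ : Fin n) a => (h a, a)) fun _ => hdis)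
  refine pr_eq_iff.2 fun F => ?_
  rw [mean_jointLaw]
  simpa only [mean_prodLaw_jointLaw] using hblock fun x => F (fun i => (x i).1, fun i => (x i).2)

end BlockInformation

section Converse

variable {A B Y Z : Type*} [Fintype A] [Fintype B] [Fintype Y] [Fintype Z]

/-- The bounds of the converse at a point `(p, a, b)`, up to an error `ε`: here `p` stands for the
law of `X1`, `a` for `H(Y1|W)` and `b` for `H(Y2|W, X2)`, while `H1`, `H2`, `HV` and `τ` stand for
`H(U1)`, `H(U2)`, `H(U1|V1)` and the entropy of `Y2`. -/
def RateBounds (H1 H2 HV τ : ℝ) (c : A → Y → ℝ) (ε : ℝ) (z : (A → ℝ) × ℝ × ℝ) : Prop :=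
  H1 ≤ infoNats z.1 c + ε ∧ H2 ≤ τ - z.2.2 + ε ∧
    HV + H2 ≤ τ - z.2.2 + (z.2.1 - mean z.1 fun x => natEntropy (c x)) + ε

lemma exists_mem_entropyRegion_rateBounds {cY : A → Y → ℝ} {cZ : A → Z → ℝ} {H1 H2 HV τ ε : ℝ}
    {z : (A → ℝ) × ℝ × ℝ} (hz : z ∈ entropyRegionUp cY cZ) (h : RateBounds H1 H2 HV τ cY ε z) :
    ∃ r ∈ entropyRegion cY cZ, RateBounds H1 H2 HV τ cY ε r := by
  obtain ⟨r, hr, _, ⟨t, ht, rfl⟩, rfl⟩ := hz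
  obtain ⟨h1, h2, h3⟩ := h
  simp only [Prod.fst_add, Prod.snd_add, Prod.smul_mk, smul_zero, add_zero, smul_eq_mul,
    mul_one] at h1 h2 h3
  exact ⟨r, hr, h1, by linarith [Set.mem_Ici.1 ht], by linarith⟩

lemma continuous_natEntropy : Continuous (natEntropy : (A → ℝ) → ℝ) :=
  continuous_finsetSum _ fun a _ => continuous_negMulLog.comp (continuous_apply a)

lemma continuous_mean (f : A → ℝ) : Continuous fun p : A → ℝ => mean p f :=
  continuous_finsetSum _ fun a _ => (continuous_apply a).mul continuous_const

lemma continuous_natEntropy_outputLaw (c : A → Y → ℝ) :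
    Continuous fun p : A → ℝ => natEntropy (outputLaw p c) :=
  continuous_natEntropy.comp (continuous_pi fun _ => continuous_mean _)

lemma continuous_infoNats (c : A → Y → ℝ) : Continuous fun p : A → ℝ => infoNats p c :=
  (continuous_natEntropy_outputLaw c).sub (continuous_mean _)

lemma isCompact_entropyRegion (cY : A → Y → ℝ) (cZ : A → Z → ℝ) :
    IsCompact (entropyRegion cY cZ) :=
  isCompact_convexHull ((isCompact_stdSimplex ℝ A).image
    (continuous_id.prodMk ((continuous_natEntropy_outputLaw cY).prodMk
      (continuous_natEntropy_outputLaw cZ))))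

lemma exists_rateBounds_zero {cY : A → Y → ℝ} {cZ : A → Z → ℝ} {H1 H2 HV τ : ℝ} {ε : ℕ → ℝ}
    (hε : Tendsto ε atTop (nhds 0))
    (h : ∀ n, ∃ r ∈ entropyRegion cY cZ, RateBounds H1 H2 HV τ cY (ε n) r) :
    ∃ r ∈ entropyRegion cY cZ, RateBounds H1 H2 HV τ cY 0 r := by
  choose r hr hbounds using h
  obtain ⟨z, hz, φ, hφ, hlim⟩ := (isCompact_entropyRegion cY cZ).tendsto_subseq hr
  have hε' := hε.comp hφ.tendsto_atTop
  have hfst := (continuous_fst.tendsto z).comp hlim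
  have hsnd := (continuous_snd.fst.tendsto z).comp hlim
  have hthird := (continuous_snd.snd.tendsto z).comp hlim
  refine ⟨z, hz, ?_, ?_, ?_⟩
  · exact le_of_tendsto_of_tendsto' tendsto_const_nhds
      ((((continuous_infoNats cY).tendsto _).comp hfst).add hε') fun n => (hbounds (φ n)).1
  · exact le_of_tendsto_of_tendsto' tendsto_const_nhds
      ((hthird.const_sub τ).add hε') fun n => (hbounds (φ n)).2.1
  · exact le_of_tendsto_of_tendsto' tendsto_const_nhds
      (((hthird.const_sub τ).add (hsnd.sub (((continuous_mean _).tendsto _).comp hfst))).add hε')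
      fun n => (hbounds (φ n)).2.2

lemma exists_auxiliary_of_mem_entropyRegion {cY : A → Y → ℝ} {cZ : A → Z → ℝ}
    {z : (A → ℝ) × ℝ × ℝ} (hz : z ∈ entropyRegion cY cZ) :
    ∃ (m : ℕ) (P : Fin m → ℝ) (k : Fin m → A → ℝ), IsPMF P ∧ IsKernel k ∧
      z = (outputLaw P k, mean P fun w => natEntropy (outputLaw (k w) cY),
        mean P fun w => natEntropy (outputLaw (k w) cZ)) := by
  obtain ⟨ι, _, P, v, hP, hP1, hv, rfl⟩ := mem_convexHull_iff_exists_fintype.1 hz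
  choose k hk hkv using hv
  have e := (Fintype.equivFin ι).symm
  refine ⟨_, P ∘ e, k ∘ e, ⟨fun _ => hP _, (e.sum_comp P).trans hP1⟩, fun _ => hk _, ?_⟩
  rw [← e.sum_comp]
  refine Prod.ext (funext fun x => ?_) (Prod.ext ?_ ?_) <;>
    simp [← hkv, entropyPoint, Prod.fst_sum, Prod.snd_sum, outputLaw, mean]

lemma exists_mem_entropyRegionUp_smul_eq [Nonempty A] {cY : A → Y → ℝ} {cZ : A → Z → ℝ}
    (hcY : IsKernel cY) (hcZ : IsKernel cZ) {n : ℕ} {q : B → ℝ} (hq : IsPMF q)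
    {μ : B → (Fin n → A) → ℝ} (hμ : IsKernel μ) :
    ∃ z ∈ entropyRegionUp cY cZ, (n : ℝ) • z = ∑ b, q b • blockPoint cY cZ (μ b) :=
  Set.mem_smul_set.1 <| (convex_entropyRegionUp.smul _).sum_mem (fun b _ => hq.1 b) hq.2
    fun b _ => blockPoint_mem hcY hcZ (hμ b)

end Converse

section BlockConverse

variable {ch1 : X1 → Y1 → ℝ} {ch2 : X1 × X2 → Y2 → ℝ}

lemma infoNats_snd_le (hch2 : IsKernel ch2) (hc1 : Cond1 ch2) {n : ℕ} {U T : Type*} [Fintype U]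
    [Fintype T] {σ : U → ℝ} (hσ : IsPMF σ) {P : T → ℝ} (hP : IsPMF P) (f1 : U → Fin n → X1)
    (f2 : T → Fin n → X2) (x0 : X2) :
    infoNats P (fun t => outputLaw σ fun u => prodLaw fun i => ch2 (f1 u i, f2 t i)) ≤
      n * (tau ch2 * log 2) -
        natEntropy (outputLaw (pr σ f1) fun x => prodLaw fun i => ch2 (x i, x0)) := by
  have hcond : ∀ t, natEntropy (outputLaw σ fun u => prodLaw fun i => ch2 (f1 u i, f2 t i)) =
      natEntropy (outputLaw (pr σ f1) fun x => prodLaw fun i => ch2 (x i, x0)) := fun t => by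
    rw [← hc1.natEntropy_outputLaw_prodLaw (isPMF_pr hσ f1) (f2 t), outputLaw_pr]
  have hletter : ∀ i, outputLaw (jointLaw P fun _ => σ) (fun a => ch2 (f1 a.2 i, f2 a.1 i)) =
      outputLaw (pr σ fun u => f1 u i) fun x1 => outputLaw (pr P fun t => f2 t i) fun x2 =>
        ch2 (x1, x2) := fun i => funext fun y => by
    simp only [outputLaw, mean_jointLaw, mean_pr]
    exact mean_comm ..
  have hblock : (outputLaw P fun t => outputLaw σ fun u => prodLaw fun i =>
      ch2 (f1 u i, f2 t i)) = outputLaw (jointLaw P fun _ => σ) fun a =>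
        prodLaw fun i => ch2 (f1 a.2 i, f2 a.1 i) := by
    funext y
    simp only [outputLaw, mean_jointLaw]
  simp only [infoNats, hcond, mean_const hP, hblock]
  refine sub_le_sub_right ((natEntropy_outputLaw_prodLaw_le (hP.jointLaw fun _ => hσ)
    fun a i => hch2 _).trans ?_) _
  simp only [hletter]
  exact (sum_le_card_nsmul _ _ _ fun i _ => natEntropy_outputLaw_le_tau hch2 (isPMF_pr hσ _)
    (isPMF_pr hP _)).trans_eq (by simp)

lemma exists_mem_entropyRegionUp_of_encoder {A Y Z U V : Type*} [Nonempty A] [Fintype A]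
    [Fintype Y] [Fintype Z] [Fintype U] [Fintype V] {cY : A → Y → ℝ} {cZ : A → Z → ℝ}
    (hcY : IsKernel cY) (hcZ : IsKernel cZ) {P : U → ℝ} {h : U → V} {q : V → ℝ} (hq : IsPMF q)
    {ρ : V → U → ℝ} (hρ : IsKernel ρ) (hdis : pr P (fun u => (h u, u)) = jointLaw q ρ) {n : ℕ}
    (f : U → Fin n → A) :
    ∃ z ∈ entropyRegionUp cY cZ, (n : ℝ) • z.1 = ∑ i, pr P (fun u => f u i) ∧
      (mean q fun v => infoNats (ρ v) fun u => prodLaw fun i => cY (f u i)) =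
        n * (z.2.1 - mean z.1 fun x => natEntropy (cY x)) ∧
      (mean q fun v => natEntropy (outputLaw (pr (ρ v) f) fun x => prodLaw fun i => cZ (x i))) =
        n * z.2.2 := by
  have hP : ∀ F, (mean q fun v => mean (ρ v) F) = mean P F := fun F => by
    rw [← mean_jointLaw q ρ fun x => F x.2, ← hdis, mean_pr]
  obtain ⟨z, hz, hsum⟩ :=
    exists_mem_entropyRegionUp_smul_eq hcY hcZ hq fun v => isPMF_pr (hρ v) f
  have hz1 : (n : ℝ) • z.1 = ∑ i, pr P (fun u => f u i) := by
    refine (congrArg Prod.fst hsum).trans (funext fun x => ?_)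
    simp only [Prod.fst_sum, Prod.smul_fst, blockPoint, Finset.sum_apply, Pi.smul_apply,
      pr_eq_mean, mean_pr, ← mean_finset_sum, ← hP, smul_eq_mul]
    rfl
  have hz2 := congrArg (fun z => z.2.1) hsum
  have hz3 := congrArg (fun z => z.2.2) hsum
  simp only [Prod.fst_sum, Prod.snd_sum, Prod.smul_fst, Prod.smul_snd, blockPoint, smul_eq_mul,
    outputLaw_pr] at hz2 hz3
  refine ⟨z, hz, hz1, ?_, ?_⟩
  · rw [mul_sub, hz2, ← mean_smul_left, hz1, mean_finset_sum_left]
    simp only [infoNats, mean_sub, mean_natEntropy_prodLaw fun u i => hcY (f u i),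
      mean_finset_sum, hP, mean_pr]
    rfl
  · simp only [outputLaw_pr, hz3]
    rfl

lemma exists_rateBounds_of_errorProb (hch1 : IsKernel ch1) (hch2 : IsKernel ch2)
    (hc1 : Cond1 ch2) {U V T : Type*} [Fintype U] [Fintype V] [Fintype T] {P1 : U → ℝ}
    (hP1 : IsPMF P1) {P2 : T → ℝ} (hP2 : IsPMF P2) {h : U → V} {q : V → ℝ} (hq : IsPMF q)
    {ρ : V → U → ℝ} (hρ : IsKernel ρ) (hdis : pr P1 (fun u => (h u, u)) = jointLaw q ρ)
    (x0 : X2) {n : ℕ} (hn : 0 < n) (f1 : U → Fin n → X1) (f2 : T → Fin n → X2)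
    (g1 : (Fin n → Y1) → U) (g2 : (Fin n → Y2) → V → T) :
    ∃ z ∈ entropyRegionUp ch1 fun x => ch2 (x, x0),
      RateBounds (natEntropy P1 / n) (natEntropy P2 / n) ((mean q fun v => natEntropy (ρ v)) / n)
        (tau ch2 * log 2) ch1
        ((2 * log 2 + errorProb P1 P2 (fun x => prodLaw fun i => ch1 (x i))
          (fun x : (Fin n → X1) × (Fin n → X2) => prodLaw fun i => ch2 (x.1 i, x.2 i)) h f1 f2 g1 g2
            * (log (Fintype.card U) + log (Fintype.card T))) / n) z := by
  have : Nonempty X1 := hP1.nonempty.map fun u => f1 u ⟨0, hn⟩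
  have hn' : (0 : ℝ) < n := Nat.cast_pos.2 hn
  have hblock1 : IsKernel fun x : Fin n → X1 => prodLaw fun i => ch1 (x i) :=
    IsKernel.prodLaw fun _ => hch1
  have hblock2 : IsKernel fun x : (Fin n → X1) × (Fin n → X2) =>
      prodLaw fun i => ch2 (x.1 i, x.2 i) := fun x => IsPMF.prodLaw fun _ => hch2 _
  obtain ⟨z, hz, hz1, hz2, hz3⟩ := exists_mem_entropyRegionUp_of_encoder hch1
    (fun x => hch2 (x, x0)) hq hρ hdis f1
  have hI1 := infoNats_prodLaw_le hP1 f1 hch1 hz1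
  have hI2 := mean_mono hq fun v _ => infoNats_snd_le hch2 hc1 (hρ v) hP2 f1 f2 x0
  rw [mean_sub, mean_const hq, hz3] at hI2
  have hF1 := natEntropy_fst_le_infoNats_add (h := h) (f1 := f1) (f2 := f2) (g1 := g1) (g2 := g2)
    hP1 hP2 hblock1 hblock2
  have hFV := mean_natEntropy_fst_le_mean_infoNats_add (f1 := f1) (f2 := f2) (g1 := g1) (g2 := g2)
    hP1 hP2 hblock1 hblock2 hq hρ hdis
  have hF2 := natEntropy_snd_le_mean_infoNats_add (f1 := f1) (f2 := f2) (g1 := g1) (g2 := g2)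
    hP1 hP2 hblock1 hblock2 hq hρ hdis
  have hE := errorProb_nonneg (h := h) (f1 := f1) (f2 := f2) (g1 := g1) (g2 := g2)
    hP1 hP2 hblock1 hblock2
  have hE1 := mul_nonneg hE (log_natCast_nonneg (Fintype.card U))
  have hE2 := mul_nonneg hE (log_natCast_nonneg (Fintype.card T))
  have hlog := log_nonneg one_le_two
  refine ⟨z, hz, ?_, ?_, ?_⟩ <;>
    rw [← sub_le_iff_le_add] <;> simp only [← add_div, ← sub_div] <;> rw [div_le_iff₀ hn'] <;>
    linarith

lemma natEntropy_prodLaw_div {α : Type*} [Fintype α] {n : ℕ} (hn : 0 < n) {p : α → ℝ}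
    (hp : IsPMF p) : natEntropy (prodLaw fun _ : Fin n => p) / n = natEntropy p := by
  rw [natEntropy_prodLaw fun _ => hp, sum_const, card_univ, Fintype.card_fin, nsmul_eq_mul,
    mul_div_cancel_left₀ _ (by positivity)]

lemma mean_natEntropy_prodLaw_div {n : ℕ} (hn : 0 < n) {α β : Type*} [Fintype α] [Fintype β]
    {q : β → ℝ} (hq : IsPMF q) {ρ : β → α → ℝ} (hρ : IsKernel ρ) :
    (mean (prodLaw fun _ : Fin n => q) fun v => natEntropy (prodLaw fun i => ρ (v i))) / n =
      mean q fun v => natEntropy (ρ v) := by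
  rw [mean_natEntropy_prodLaw fun (v : Fin n → β) i => hρ (v i)]
  simp only [mean_prodLaw_apply (fun _ : Fin n => hq) _ fun v => natEntropy (ρ v)]
  rw [sum_const, card_univ, Fintype.card_fin, nsmul_eq_mul,
    mul_div_cancel_left₀ _ (by positivity)]

lemma log_card_pi (α : Type*) [Fintype α] (n : ℕ) :
    log (Fintype.card (Fin n → α)) = n * log (Fintype.card α) := by
  rw [Fintype.card_fun, Fintype.card_fin, Nat.cast_pow, log_pow]

lemma exists_rateBounds_of_code (hch1 : IsKernel ch1) (hch2 : IsKernel ch2) (hc1 : Cond1 ch2)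
    {pU1 : U1 → ℝ} (hpU1 : IsPMF pU1) {pU2 : U2 → ℝ} (hpU2 : IsPMF pU2) {h1 : U1 → V1}
    {q : V1 → ℝ} (hq : IsPMF q) {ρ : V1 → U1 → ℝ} (hρ : IsKernel ρ)
    (hdis : pr pU1 (fun u => (h1 u, u)) = jointLaw q ρ) (x0 : X2) {n : ℕ} (hn : 0 < n)
    (f1 : (Fin n → U1) → Fin n → X1) (f2 : (Fin n → U2) → Fin n → X2)
    (g1 : (Fin n → Y1) → Fin n → U1) (g2 : (Fin n → Y2) → (Fin n → V1) → Fin n → U2) :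
    ∃ r ∈ entropyRegion ch1 fun x => ch2 (x, x0),
      RateBounds (natEntropy pU1) (natEntropy pU2) (mean q fun v => natEntropy (ρ v))
        (tau ch2 * log 2) ch1 (2 * log 2 / n + PerrZDet ch1 ch2 pU1 h1 pU2 n f1 f2 g1 g2 *
          (log (Fintype.card U1) + log (Fintype.card U2))) r := by
  obtain ⟨z, hz, hbounds⟩ := exists_rateBounds_of_errorProb hch1 hch2 hc1
    (IsPMF.prodLaw fun _ => hpU1) (IsPMF.prodLaw fun _ => hpU2) (IsPMF.prodLaw fun _ => hq)
    (IsKernel.prodLaw fun _ => hρ) (pr_prodLaw_prod hdis) x0 hn f1 f2 g1 g2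
  rw [← PerrZDet_eq_errorProb, natEntropy_prodLaw_div hn hpU1, natEntropy_prodLaw_div hn hpU2,
    mean_natEntropy_prodLaw_div hn hq hρ, log_card_pi, log_card_pi, add_div, ← mul_add,
    mul_left_comm, mul_div_cancel_left₀ _ (by positivity)] at hbounds
  exact exists_mem_entropyRegion_rateBounds hz hbounds

lemma exists_rateBounds_of_reliable (hch1 : IsKernel ch1) (hch2 : IsKernel ch2) (hc1 : Cond1 ch2)
    {pU1 : U1 → ℝ} (hpU1 : IsPMF pU1) {pU2 : U2 → ℝ} (hpU2 : IsPMF pU2) {h1 : U1 → V1}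
    {q : V1 → ℝ} (hq : IsPMF q) {ρ : V1 → U1 → ℝ} (hρ : IsKernel ρ)
    (hdis : pr pU1 (fun u => (h1 u, u)) = jointLaw q ρ) (x0 : X2)
    (hrel : ReliableZDet ch1 ch2 pU1 h1 pU2) :
    ∃ r ∈ entropyRegion ch1 fun x => ch2 (x, x0),
      RateBounds (natEntropy pU1) (natEntropy pU2) (mean q fun v => natEntropy (ρ v))
        (tau ch2 * log 2) ch1 0 r := by
  obtain ⟨f1, f2, g1, g2, hlim⟩ := hrel
  refine exists_rateBounds_zero ?_ fun n => exists_rateBounds_of_code hch1 hch2 hc1 hpU1 hpU2 hq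
    hρ hdis x0 n.succ_pos (f1 _) (f2 _) (g1 _) (g2 _)
  have hinv := tendsto_const_div_atTop_nhds_zero_nat (2 * log 2)
  simpa only [zero_mul, add_zero, Function.comp_def] using
    (hinv.add (hlim.mul_const (log (Fintype.card U1) + log (Fintype.card U2)))).comp
      (tendsto_add_atTop_nat 1)

theorem exists_auxiliary_of_reliable (hch1 : IsKernel ch1) (hch2 : IsKernel ch2)
    (hc1 : Cond1 ch2) {pstar : X2 → ℝ} (hc2 : Cond2 ch2 pstar) {pU1 : U1 → ℝ}
    (hpU1 : IsPMF pU1) {pU2 : U2 → ℝ} (hpU2 : IsPMF pU2) {h1 : U1 → V1}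
    {q : V1 → ℝ} (hq : IsPMF q) {ρ : V1 → U1 → ℝ} (hρ : IsKernel ρ)
    (hdis : pr pU1 (fun u => (h1 u, u)) = jointLaw q ρ)
    (hrel : ReliableZDet ch1 ch2 pU1 h1 pU2) :
    ∃ (m : ℕ) (pW : Fin m → ℝ) (k : Fin m → X1 → ℝ), IsPMF pW ∧ IsKernel k ∧
      natEntropy pU1 ≤ infoNats (outputLaw pW k) ch1 ∧
      natEntropy pU2 ≤ infoNats (jointLaw pW fun _ => pstar)
        (fun v => outputLaw (k v.1) fun x => ch2 (x, v.2)) ∧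
      (mean q fun v => natEntropy (ρ v)) + natEntropy pU2 ≤
        infoNats (jointLaw pW fun _ => pstar)
          (fun v => outputLaw (k v.1) fun x => ch2 (x, v.2)) +
        mean pW fun w => infoNats (k w) ch1 := by
  obtain ⟨x0⟩ := hc2.1.nonempty
  obtain ⟨r, hr, hbounds⟩ :=
    exists_rateBounds_of_reliable hch1 hch2 hc1 hpU1 hpU2 hq hρ hdis x0 hrel
  obtain ⟨m, pW, k, hpW, hk, rfl⟩ := exists_auxiliary_of_mem_entropyRegion hr
  refine ⟨m, pW, k, hpW, hk, ?_⟩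
  have hI : (mean pW fun w => infoNats (k w) ch1) =
      (mean pW fun w => natEntropy (outputLaw (k w) ch1)) -
        mean pW fun w => mean (k w) fun x => natEntropy (ch1 x) := mean_sub ..
  rw [infoNats_eq_tau_sub hch2 hc1 hc2 hpW hk x0, hI]
  simpa only [RateBounds, add_zero, mean_outputLaw] using hbounds

end BlockConverse

section UnionBound

variable {U Y : Type*} [Fintype U] [Fintype Y]

/-- The union bound on the error probability of a decoder which outputs a message passing the test
`G`: the transmitted message may fail the test, or another message may pass it. -/
noncomputable def unionBound (P : U → ℝ) (c : U → Y → ℝ) (G : U → Y → Prop) : ℝ :=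
  mean P fun u => mean (c u) fun y => ind (¬G u y) + ∑ u' ∈ univ.erase u, ind (G u' y)

lemma exists_decodeError_le_unionBound [Nonempty U] (G : U → Y → Prop) :
    ∃ g : Y → U, ∀ {P : U → ℝ} {c : U → Y → ℝ}, IsPMF P → IsKernel c →
      decodeError P c g ≤ unionBound P c G := by
  refine ⟨fun y => Classical.epsilon fun u => G u y, fun hP hc =>
    mean_mono hP fun u _ => mean_mono (hc u) fun y _ => ?_⟩
  have hsum := sum_nonneg fun u' (_ : u' ∈ univ.erase u) => ind_nonneg (G u' y)
  by_cases hu : G u y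
  · by_cases heq : Classical.epsilon (fun u => G u y) = u
    · rw [ind_false (not_not.2 heq)]
      exact add_nonneg (ind_nonneg _) hsum
    · refine (ind_le_one _).trans (le_add_of_nonneg_of_le (ind_nonneg _) ?_)
      refine (ind_true (Classical.epsilon_spec (p := fun u => G u y) ⟨u, hu⟩)).symm.trans_le ?_
      exact single_le_sum (f := fun u' => ind (G u' y)) (fun _ _ => ind_nonneg _)
        (mem_erase.2 ⟨heq, mem_univ _⟩)
  · exact (ind_le_one _).trans (le_add_of_le_of_nonneg (ind_true hu).ge hsum)

end UnionBound

section JointTest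

variable {I L T U W A Y : Type*} [Fintype I] [Fintype L] [Fintype T] [Fintype U]
  [Fintype W] [Fintype A] [Fintype Y]

/-- The likelihood-ratio test declaring that the output `y` was caused by the codeword `x` of the
cloud `w`. Clouds have law `pW`, codewords of the cloud `w` have law `k w`, and `c w x` is the law
of the output. The first condition is unlikely to hold when `y` is caused by another cloud, the
second when it is caused by another codeword of the same cloud. -/
def JointTest (pW : W → ℝ) (k : W → A → ℝ) (c : W → A → Y → ℝ) (γ N₁ N₂ : ℝ) (w : W) (x : A)
    (y : Y) : Prop :=
  γ * outputLaw pW (fun w => outputLaw (k w) (c w)) y ≤ N₁ * c w x y ∧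
    γ * outputLaw (k w) (c w) y ≤ N₂ * c w x y

/-- The probability that a message `u` of law `P`, transmitted in a random cloud, fails the test
with weights `N₁ u` and `N₂ u`. -/
noncomputable def missProb (P : U → ℝ) (pW : W → ℝ) (k : W → A → ℝ) (c : W → A → Y → ℝ) (γ : ℝ)
    (N₁ N₂ : U → ℝ) : ℝ :=
  mean P fun u => mean pW fun w => mean (k w) fun x => mean (c w x) fun y =>
    ind (¬JointTest pW k c γ (N₁ u) (N₂ u) w x y)

variable {pW : W → ℝ} {k : W → A → ℝ} {c : W → A → Y → ℝ} {γ : ℝ}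

/-- Change of measure: on the event, the law `q` is at most `N / γ` times the law `d`. -/
lemma mean_ind_le_div {q d : Y → ℝ} (hd : IsPMF d) {γ N : ℝ} (hγ : 0 < γ) (hN : 0 ≤ N) :
    (mean q fun y => ind (γ * q y ≤ N * d y)) ≤ N / γ := by
  have hpoint : ∀ y, q y * ind (γ * q y ≤ N * d y) ≤ d y * (N / γ) := fun y => by
    by_cases h : γ * q y ≤ N * d y
    · rw [ind_true h, mul_one, mul_div_assoc', le_div_iff₀ hγ]
      linarith
    · rw [ind_false h, mul_zero]
      exact mul_nonneg (hd.1 y) (by positivity)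
  exact (sum_le_sum fun y _ => hpoint y).trans_eq (mean_const hd _)

lemma mean_jointTest_of_indep_cloud (hpW : IsPMF pW) (hk : IsKernel k) (hc : ∀ w, IsKernel (c w))
    (hγ : 0 < γ) {N₁ N₂ : ℝ} (hN₁ : 0 ≤ N₁) :
    (mean pW fun w => mean pW fun w' => mean (outputLaw (k w) (c w)) fun y => mean (k w') fun x' =>
      ind (JointTest pW k c γ N₁ N₂ w' x' y)) ≤ N₁ / γ := by
  calc _ = mean pW fun w' => mean (k w') fun x' =>
        mean (outputLaw pW fun w => outputLaw (k w) (c w)) fun y =>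
          ind (JointTest pW k c γ N₁ N₂ w' x' y) := by
        rw [mean_comm]
        simp only [mean_outputLaw pW, mean_comm (outputLaw _ _) (k _), mean_comm pW (k _)]
    _ ≤ N₁ / γ := by
        refine (mean_mono hpW fun w' _ => mean_le (hk w') fun x' => ?_).trans_eq (mean_const hpW _)
        refine le_trans (sum_le_sum fun y _ => mul_le_mul_of_nonneg_left (ind_mono fun h => h.1) ?_)
          (mean_ind_le_div (hc w' x') hγ hN₁)
        exact (hpW.outputLaw fun w => (hk w).outputLaw (hc w)).1 y

lemma mean_jointTest_of_same_cloud (hpW : IsPMF pW) (hk : IsKernel k) (hc : ∀ w, IsKernel (c w))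
    (hγ : 0 < γ) {N₁ N₂ : ℝ} (hN₂ : 0 ≤ N₂) :
    (mean pW fun w => mean (outputLaw (k w) (c w)) fun y => mean (k w) fun x' =>
      ind (JointTest pW k c γ N₁ N₂ w x' y)) ≤ N₂ / γ := by
  refine mean_le hpW fun w => ?_
  rw [mean_comm]
  refine mean_le (hk w) fun x' => (mean_mono ((hk w).outputLaw (hc w)) fun y _ =>
    ind_mono fun h => h.2).trans (mean_ind_le_div (hc w x') hγ hN₂)

lemma mean_jointTest_le [DecidableEq I] (hpW : IsPMF pW) (hk : IsKernel k)
    (hc : ∀ w, IsKernel (c w)) (hγ : 0 < γ) {N₁ N₂ : ℝ} (hN₁ : 0 ≤ N₁) (hN₂ : 0 ≤ N₂) (i i' : I) :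
    (mean (prodLaw fun _ : I => pW) fun w => mean (outputLaw (k (w i)) (c (w i))) fun y =>
      mean (k (w i')) fun x' => ind (JointTest pW k c γ N₁ N₂ (w i') x' y)) ≤
      N₁ / γ + ind (i = i') * (N₂ / γ) := by
  by_cases h : i = i'
  · subst h
    rw [ind_true rfl, one_mul, mean_prodLaw_apply (fun _ => hpW) i fun w =>
      mean (outputLaw (k w) (c w)) fun y => mean (k w) fun x' =>
        ind (JointTest pW k c γ N₁ N₂ w x' y)]
    exact le_add_of_nonneg_of_le (by positivity) (mean_jointTest_of_same_cloud hpW hk hc hγ hN₂)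
  · rw [ind_false h, zero_mul, add_zero, mean_prodLaw_apply_apply (fun _ => hpW) h fun w w' =>
      mean (outputLaw (k w) (c w)) fun y => mean (k w') fun x' =>
        ind (JointTest pW k c γ N₁ N₂ w' x' y)]
    exact mean_jointTest_of_indep_cloud hpW hk hc hγ hN₁

lemma mean_unionBound_clouds_le [DecidableEq I] (hpW : IsPMF pW) (hk : IsKernel k)
    (hc : ∀ w, IsKernel (c w)) (hγ : 0 < γ) {P N₁ N₂ : U → ℝ} (hP : IsPMF P)
    (hN₁ : ∀ u, 0 ≤ N₁ u) (hN₂ : ∀ u, 0 ≤ N₂ u) (i : U → I) :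
    (mean (prodLaw fun _ : I => pW) fun w => mean (prodLaw fun u => k (w (i u))) fun x =>
      unionBound P (fun u => c (w (i u)) (x u)) fun u y =>
        JointTest pW k c γ (N₁ u) (N₂ u) (w (i u)) (x u) y) ≤
      missProb P pW k c γ N₁ N₂ +
        mean P fun u => ∑ u' ∈ univ.erase u, (N₁ u' / γ + ind (i u = i u') * (N₂ u' / γ)) := by
  have hmiss : ∀ u, (mean (prodLaw fun _ : I => pW) fun w => mean (prodLaw fun u => k (w (i u)))
      fun x => mean (c (w (i u)) (x u)) fun y =>
        ind (¬JointTest pW k c γ (N₁ u) (N₂ u) (w (i u)) (x u) y)) =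
      mean pW fun w => mean (k w) fun x => mean (c w x) fun y =>
        ind (¬JointTest pW k c γ (N₁ u) (N₂ u) w x y) := fun u => by
    rw [← mean_prodLaw_apply (fun _ : I => hpW) (i u)]
    exact congrArg _ (funext fun w => mean_prodLaw_apply (fun u => hk (w (i u))) u fun x =>
      mean (c (w (i u)) x) fun y => ind (¬JointTest pW k c γ (N₁ u) (N₂ u) (w (i u)) x y))
  have hconfuse : ∀ u, ∀ u' ∈ univ.erase u, (mean (prodLaw fun _ : I => pW) fun w =>
      mean (prodLaw fun u => k (w (i u))) fun x => mean (c (w (i u)) (x u)) fun y =>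
        ind (JointTest pW k c γ (N₁ u') (N₂ u') (w (i u')) (x u') y)) ≤
      N₁ u' / γ + ind (i u = i u') * (N₂ u' / γ) := fun u u' hu' => by
    refine le_trans (le_of_eq ?_)
      (mean_jointTest_le hpW hk hc hγ (hN₁ u') (hN₂ u') (i u) (i u'))
    refine congrArg _ (funext fun w => (mean_prodLaw_apply_apply (fun u => hk (w (i u)))
      (ne_of_mem_erase hu').symm fun x x' => mean (c (w (i u)) x) fun y =>
        ind (JointTest pW k c γ (N₁ u') (N₂ u') (w (i u')) x' y)).trans ?_)
    rw [mean_outputLaw]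
    exact congrArg _ (funext fun x => mean_comm ..)
  simp only [unionBound, mean_add, mean_finset_sum, mean_comm _ P, hmiss]
  exact add_le_add_right (mean_mono hP fun u _ => sum_le_sum (hconfuse u)) _

lemma mean_unionBound_satellites_le [DecidableEq I] {ps : A → ℝ} (hpW : IsPMF pW) (hps : IsPMF ps)
    (hc : ∀ w, IsKernel (c w)) (hγ : 0 < γ) {P N₁ N₂ : T → ℝ} (hP : IsPMF P)
    (hN₁ : ∀ t, 0 ≤ N₁ t) (hN₂ : ∀ t, 0 ≤ N₂ t) (s : L → I) (l₀ : L) :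
    (mean (prodLaw fun _ : I => pW) fun w => mean (prodLaw fun _ : T => ps) fun a =>
      unionBound P (fun t => c (w (s l₀)) (a t)) fun t y =>
        ∃ l, JointTest pW (fun _ => ps) c γ (N₁ t) (N₂ t) (w (s l)) (a t) y) ≤
      missProb P pW (fun _ => ps) c γ N₁ N₂ + mean P fun t => ∑ t' ∈ univ.erase t, ∑ l,
        (N₁ t' / γ + ind (s l₀ = s l) * (N₂ t' / γ)) := by
  have hmiss : ∀ t, (mean (prodLaw fun _ : I => pW) fun w => mean (prodLaw fun _ : T => ps)
      fun a => mean (c (w (s l₀)) (a t)) fun y =>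
        ind (¬∃ l, JointTest pW (fun _ => ps) c γ (N₁ t) (N₂ t) (w (s l)) (a t) y)) ≤
      mean pW fun w => mean ps fun x => mean (c w x) fun y =>
        ind (¬JointTest pW (fun _ => ps) c γ (N₁ t) (N₂ t) w x y) := fun t => by
    rw [← mean_prodLaw_apply (fun _ : I => hpW) (s l₀)]
    refine mean_mono (IsPMF.prodLaw fun _ => hpW) fun w _ => ?_
    rw [← mean_prodLaw_apply (fun _ : T => hps) t]
    exact mean_mono (IsPMF.prodLaw fun _ => hps) fun a _ => mean_mono (hc _ _) fun y _ =>
      ind_mono fun h hl => h ⟨l₀, hl⟩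
  have hconfuse : ∀ t, ∀ t' ∈ univ.erase t, (mean (prodLaw fun _ : I => pW) fun w =>
      mean (prodLaw fun _ : T => ps) fun a => mean (c (w (s l₀)) (a t)) fun y =>
        ind (∃ l, JointTest pW (fun _ => ps) c γ (N₁ t') (N₂ t') (w (s l)) (a t') y)) ≤
      ∑ l, (N₁ t' / γ + ind (s l₀ = s l) * (N₂ t' / γ)) := fun t t' ht' => by
    refine le_trans ?_ (sum_le_sum fun l _ =>
      mean_jointTest_le hpW (fun _ => hps) hc hγ (hN₁ t') (hN₂ t') (s l₀) (s l))
    rw [← mean_finset_sum]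
    refine mean_mono (IsPMF.prodLaw fun _ => hpW) fun w _ => ?_
    rw [mean_prodLaw_apply_apply (fun _ => hps) (ne_of_mem_erase ht').symm fun x x' =>
      mean (c (w (s l₀)) x) fun y =>
        ind (∃ l, JointTest pW (fun _ => ps) c γ (N₁ t') (N₂ t') (w (s l)) x' y)]
    refine (mean_mono hps fun x _ => mean_mono hps fun x' _ => mean_mono (hc _ x) fun y _ =>
      ind_exists_le _).trans_eq ?_
    simp only [mean_finset_sum, mean_outputLaw]
    exact sum_congr rfl fun l _ => congrArg _ (funext fun x => mean_comm ..)
  simp only [unionBound, mean_add, mean_finset_sum, mean_comm _ P]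
  exact add_le_add (mean_mono hP fun t _ => hmiss t)
    (mean_mono hP fun t _ => sum_le_sum (hconfuse t))

end JointTest

section RandomCoding

variable {U V T L W A B Y Z : Type*} [Fintype U] [Fintype T] [Fintype L] [Fintype W]
  [Fintype A] [Fintype B] [Fintype Y] [Fintype Z]

/-- The uniform law on a finite type; it is the zero weight when the type is empty. -/
noncomputable def uniformLaw (L : Type*) [Fintype L] : L → ℝ := fun _ => (Fintype.card L : ℝ)⁻¹

lemma isPMF_uniformLaw [Nonempty L] : IsPMF (uniformLaw L) := by
  refine ⟨fun _ => inv_nonneg.2 (Nat.cast_nonneg _), ?_⟩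
  simp only [uniformLaw, sum_const, card_univ, nsmul_eq_mul]
  exact mul_inv_cancel₀ (Nat.cast_ne_zero.2 Fintype.card_ne_zero)

lemma mean_ind_binning_eq [Nonempty L] {u u' : U} (h : u ≠ u') :
    mean (prodLaw fun _ : U => uniformLaw L) (fun b => ind (b u = b u')) =
      (Fintype.card L : ℝ)⁻¹ := by
  rw [mean_prodLaw_apply_apply (fun _ => isPMF_uniformLaw) h fun l l' => ind (l = l')]
  have hcollide : ∀ l : L, mean (uniformLaw L) (fun l' => ind (l = l')) = (Fintype.card L : ℝ)⁻¹ :=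
    fun l => by simp only [eq_comm (a := l), mean_ind_eq, uniformLaw]
  simp only [hcollide, mean_const isPMF_uniformLaw]

variable {P₁ : U → ℝ} {P₂ : T → ℝ} {pW : W → ℝ} {k : W → A → ℝ} {ps : B → ℝ} {ch₁ : A → Y → ℝ}
  {h : U → V} {ρ : V → U → ℝ} {γ r : ℝ}

lemma sum_ind_eq_mul_le_one (hρ : IsKernel ρ) (u : U) :
    ∑ u', ind (h u = h u') * ρ (h u') u' ≤ 1 := by
  refine (sum_le_sum fun u' _ => ?_).trans_eq (hρ (h u)).2
  by_cases heq : h u = h u'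
  · rw [ind_true heq, one_mul, heq]
  · rw [ind_false heq, zero_mul]
    exact (hρ _).1 u'

lemma mean_confusion_clouds_le [Nonempty L] (hP₁ : IsPMF P₁) (hρ : IsKernel ρ) (hγ : 0 < γ)
    (hr : 0 < r) (hrL : r ≤ Fintype.card L) :
    (mean (prodLaw fun _ : U => uniformLaw L) fun b => mean P₁ fun u => ∑ u' ∈ univ.erase u,
      (P₁ u' / γ + ind ((h u, b u) = (h u', b u')) * (r * ρ (h u') u' / γ))) ≤ 2 / γ := by
  have hcard : (0 : ℝ) < Fintype.card L := hr.trans_le hrL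
  have hpair : ∀ u, ∀ u' ∈ univ.erase u, (mean (prodLaw fun _ : U => uniformLaw L) fun b =>
      P₁ u' / γ + ind ((h u, b u) = (h u', b u')) * (r * ρ (h u') u' / γ)) ≤
      P₁ u' / γ + ind (h u = h u') * ρ (h u') u' / γ := fun u u' hu' => by
    rw [mean_add, mean_const (IsPMF.prodLaw fun _ => isPMF_uniformLaw), mean_mul_const]
    refine add_le_add_right ?_ _
    by_cases heq : h u = h u'
    · simp only [Prod.mk.injEq, heq, true_and, mean_ind_binning_eq (ne_of_mem_erase hu').symm]
      rw [ind_true trivial, one_mul, mul_div_assoc', ← mul_assoc, inv_mul_eq_div]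
      gcongr
      exact mul_le_of_le_one_left ((hρ _).1 u') ((div_le_one hcard).2 hrL)
    · simp only [Prod.mk.injEq, heq, false_and, ind_false not_false, zero_mul, zero_div,
        mean_const (IsPMF.prodLaw fun _ => isPMF_uniformLaw), le_refl]
  rw [mean_comm]
  refine mean_le hP₁ fun u => ?_
  rw [mean_finset_sum]
  calc _ ≤ ∑ u' ∈ univ.erase u, (P₁ u' / γ + ind (h u = h u') * ρ (h u') u' / γ) :=
        sum_le_sum (hpair u)
    _ ≤ ∑ u', (P₁ u' / γ + ind (h u = h u') * ρ (h u') u' / γ) :=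
        sum_le_univ_sum_of_nonneg fun u' => add_nonneg (div_nonneg (hP₁.1 u') hγ.le) <|
          div_nonneg (mul_nonneg (ind_nonneg _) ((hρ _).1 u')) hγ.le
    _ ≤ 2 / γ := by
        rw [sum_add_distrib, ← sum_div, ← sum_div, hP₁.2, ← add_div]
        gcongr
        linarith [sum_ind_eq_mul_le_one (h := h) hρ u]

lemma sum_confusion_satellites_le (hP₂ : IsPMF P₂) (hγ : 0 < γ) (hr : 0 < r)
    (hLr : Fintype.card L ≤ 2 * r) (t : T) (v : V) (l₀ : L) :
    ∑ t' ∈ univ.erase t, ∑ l : L,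
      (P₂ t' / r / γ + ind ((v, l₀) = (v, l)) * (P₂ t' / γ)) ≤ 3 / γ := by
  have hsum : ∀ t', ∑ l : L, (P₂ t' / r / γ + ind ((v, l₀) = (v, l)) * (P₂ t' / γ)) =
      P₂ t' * ((Fintype.card L / r + 1) / γ) := fun t' => by
    simp only [Prod.mk.injEq, true_and, sum_add_distrib, sum_const, card_univ, nsmul_eq_mul,
      ← sum_mul, ind, sum_ite_eq, mem_univ, if_true, one_mul]
    ring
  simp only [hsum]
  calc _ ≤ ∑ t', P₂ t' * ((Fintype.card L / r + 1) / γ) :=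
        sum_le_univ_sum_of_nonneg fun t' => mul_nonneg (hP₂.1 t') (by positivity)
    _ = (Fintype.card L / r + 1) / γ := by rw [← sum_mul, hP₂.2, one_mul]
    _ ≤ 3 / γ := by
        gcongr
        linarith [(div_le_iff₀ hr).2 hLr]

variable [Fintype V]

lemma exists_cloud_decoder [Nonempty L] (hP₁ : IsPMF P₁) (hpW : IsPMF pW) (hk : IsKernel k)
    (hch₁ : IsKernel ch₁) (hρ : IsKernel ρ) (hγ : 0 < γ) (hr : 0 < r) (hrL : r ≤ Fintype.card L) :
    ∃ g : (U → L) → (V × L → W) → (U → A) → Y → U,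
      (mean (prodLaw fun _ : U => uniformLaw L) fun b => mean (prodLaw fun _ : V × L => pW)
        fun w => mean (prodLaw fun u => k (w (h u, b u))) fun x =>
          decodeError P₁ (fun u => ch₁ (x u)) (g b w x)) ≤
        missProb P₁ pW k (fun _ => ch₁) γ P₁ (fun u => r * ρ (h u) u) + 2 / γ := by
  have := hP₁.nonempty
  choose g hg using fun (b : U → L) (w : V × L → W) (x : U → A) =>
    exists_decodeError_le_unionBound fun u y =>
      JointTest pW k (fun _ => ch₁) γ (P₁ u) (r * ρ (h u) u) (w (h u, b u)) (x u) y
  have hL : IsPMF (prodLaw fun _ : U => uniformLaw L) := IsPMF.prodLaw fun _ => isPMF_uniformLaw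
  refine ⟨g, (mean_mono hL fun b _ => ?_).trans ((mean_add _ _ _).trans_le
    (add_le_add (mean_const hL _).le (mean_confusion_clouds_le (h := h) hP₁ hρ hγ hr hrL)))⟩
  refine le_trans (mean_mono (IsPMF.prodLaw fun _ => hpW) fun w _ =>
    mean_mono (IsPMF.prodLaw fun u => hk _) fun x _ => hg b w x hP₁ fun u => hch₁ (x u)) ?_
  exact mean_unionBound_clouds_le hpW hk (fun _ => hch₁) hγ hP₁ hP₁.1
    (fun u => mul_nonneg hr.le ((hρ _).1 u)) fun u => (h u, b u)

lemma exists_satellite_decoder {c : W → B → Z → ℝ} (hP₂ : IsPMF P₂) (hpW : IsPMF pW)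
    (hps : IsPMF ps) (hc : ∀ w, IsKernel (c w)) (hγ : 0 < γ) (hr : 0 < r)
    (hLr : Fintype.card L ≤ 2 * r) :
    ∃ g : (V × L → W) → (T → B) → Z → V → T, ∀ v l,
      (mean (prodLaw fun _ : V × L => pW) fun w => mean (prodLaw fun _ : T => ps) fun a =>
        decodeError P₂ (fun t => c (w (v, l)) (a t)) fun z => g w a z v) ≤
        missProb P₂ pW (fun _ => ps) c γ (fun t => P₂ t / r) P₂ + 3 / γ := by
  have := hP₂.nonempty
  choose g hg using fun (w : V × L → W) (a : T → B) (v : V) =>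
    exists_decodeError_le_unionBound fun t z =>
      ∃ l, JointTest pW (fun _ => ps) c γ (P₂ t / r) (P₂ t) (w (v, l)) (a t) z
  refine ⟨fun w a z v => g w a v z, fun v l => ?_⟩
  refine le_trans (mean_mono (IsPMF.prodLaw fun _ => hpW) fun w _ =>
    mean_mono (IsPMF.prodLaw fun _ => hps) fun a _ => hg w a v hP₂ fun t => hc _ (a t)) ?_
  refine (mean_unionBound_satellites_le hpW hps hc hγ hP₂ (fun t => div_nonneg (hP₂.1 t) hr.le)
    hP₂.1 (fun l => (v, l)) l).trans (add_le_add_right (mean_le hP₂ fun t => ?_) _)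
  exact sum_confusion_satellites_le hP₂ hγ hr hLr t v l

variable {ch₂ : A × B → Z → ℝ}

lemma mean_decodeError_of_codewords {κ : U → A → ℝ} (hκ : IsKernel κ) (c : A → T → Z → ℝ)
    (g : U → Z → T) :
    (mean (prodLaw κ) fun x => mean P₁ fun u => decodeError P₂ (c (x u)) (g u)) =
      mean P₁ fun u => decodeError P₂ (fun t => outputLaw (κ u) fun α => c α t) (g u) := by
  rw [mean_comm]
  refine congrArg _ (funext fun u => ?_)
  rw [mean_prodLaw_apply hκ u fun α => decodeError P₂ (c α) (g u)]
  simp only [decodeError, mean_outputLaw]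
  exact mean_comm ..

lemma exists_errorProb_le_add [Nonempty L] (hP₁ : IsPMF P₁) (hP₂ : IsPMF P₂) (hpW : IsPMF pW)
    (hk : IsKernel k) (hps : IsPMF ps) (hch₁ : IsKernel ch₁) (hch₂ : IsKernel ch₂) {ε₁ ε₂ : ℝ}
    {g₁ : (U → L) → (V × L → W) → (U → A) → Y → U} {g₂ : (V × L → W) → (T → B) → Z → V → T}
    (hg₁ : (mean (prodLaw fun _ : U => uniformLaw L) fun b => mean (prodLaw fun _ : V × L => pW)
      fun w => mean (prodLaw fun u => k (w (h u, b u))) fun x =>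
        decodeError P₁ (fun u => ch₁ (x u)) (g₁ b w x)) ≤ ε₁)
    (hg₂ : ∀ v l, (mean (prodLaw fun _ : V × L => pW) fun w => mean (prodLaw fun _ : T => ps)
      fun a => decodeError P₂ (fun t => outputLaw (k (w (v, l))) fun α => ch₂ (α, a t))
        fun z => g₂ w a z v) ≤ ε₂) :
    ∃ b w x a, errorProb P₁ P₂ ch₁ ch₂ h x a (g₁ b w x) (g₂ w a) ≤ ε₁ + ε₂ := by
  let E := fun (b : U → L) (w : V × L → W) (x : U → A) (a : T → B) =>
    decodeError P₁ (fun u => ch₁ (x u)) (g₁ b w x) +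
      mean P₁ fun u => decodeError P₂ (fun t => ch₂ (x u, a t)) fun z => g₂ w a z (h u)
  have hL : IsPMF (prodLaw fun _ : U => uniformLaw L) := IsPMF.prodLaw fun _ => isPMF_uniformLaw
  have hw : IsPMF (prodLaw fun _ : V × L => pW) := IsPMF.prodLaw fun _ => hpW
  have ha : IsPMF (prodLaw fun _ : T => ps) := IsPMF.prodLaw fun _ => hps
  have hx : ∀ (b : U → L) (w : V × L → W), IsPMF (prodLaw fun u => k (w (h u, b u))) := fun b w =>
    IsPMF.prodLaw fun u => hk (w (h u, b u))
  have hE : (mean (prodLaw fun _ : U => uniformLaw L) fun b => mean (prodLaw fun _ : V × L => pW)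
      fun w => mean (prodLaw fun u => k (w (h u, b u))) fun x =>
        mean (prodLaw fun _ : T => ps) (E b w x)) ≤ ε₁ + ε₂ := by
    simp only [E, mean_add, mean_const ha]
    refine add_le_add hg₁ (mean_le hL fun b => ?_)
    calc _ = mean P₁ fun u => mean (prodLaw fun _ : V × L => pW) fun w =>
          mean (prodLaw fun _ : T => ps) fun a => decodeError P₂
            (fun t => outputLaw (k (w (h u, b u))) fun α => ch₂ (α, a t))
              fun z => g₂ w a z (h u) := by
          simp only [mean_comm P₁]
          refine congrArg _ (funext fun w => (mean_comm ..).trans (congrArg _ (funext fun a => ?_)))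
          exact mean_decodeError_of_codewords (fun u => hk _) (fun α t => ch₂ (α, a t)) _
      _ ≤ ε₂ := mean_le hP₁ fun u => hg₂ (h u) (b u)
  obtain ⟨b, hb⟩ := exists_le_mean hL fun b => mean (prodLaw fun _ : V × L => pW) fun w =>
    mean (prodLaw fun u => k (w (h u, b u))) fun x => mean (prodLaw fun _ : T => ps) (E b w x)
  obtain ⟨w, hw⟩ := exists_le_mean hw fun w => mean (prodLaw fun u => k (w (h u, b u))) fun x =>
    mean (prodLaw fun _ : T => ps) (E b w x)
  obtain ⟨x, hx⟩ := exists_le_mean (hx b w) fun x => mean (prodLaw fun _ : T => ps) (E b w x)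
  obtain ⟨a, ha⟩ := exists_le_mean ha (E b w x)
  exact ⟨b, w, x, a, (errorProb_le_add hP₁ hP₂ hch₁ hch₂).trans
    (ha.trans (hx.trans (hw.trans (hb.trans hE))))⟩

/-- Superposition coding: the message `u` is binned at random to `b u`, the cloud centre
`w (h u, b u)` depends on `u` only through what the second receiver knows and the bin, and `x u` is
a satellite codeword. The second receiver decodes its own message together with the bin. -/
lemma exists_errorProb_le [Nonempty L] (hP₁ : IsPMF P₁) (hP₂ : IsPMF P₂) (hpW : IsPMF pW)
    (hk : IsKernel k) (hps : IsPMF ps) (hch₁ : IsKernel ch₁) (hch₂ : IsKernel ch₂)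
    (hρ : IsKernel ρ) (hγ : 0 < γ) (hr : 0 < r) (hrL : r ≤ Fintype.card L)
    (hLr : Fintype.card L ≤ 2 * r) :
    ∃ f₁ f₂ g₁ g₂, errorProb P₁ P₂ ch₁ ch₂ h f₁ f₂ g₁ g₂ ≤
      missProb P₁ pW k (fun _ => ch₁) γ P₁ (fun u => r * ρ (h u) u) +
      missProb P₂ pW (fun _ => ps) (fun w β => outputLaw (k w) fun α => ch₂ (α, β)) γ
        (fun t => P₂ t / r) P₂ + 5 / γ := by
  obtain ⟨g₁, hg₁⟩ := exists_cloud_decoder (L := L) (h := h) hP₁ hpW hk hch₁ hρ hγ hr hrL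
  obtain ⟨g₂, hg₂⟩ := exists_satellite_decoder (V := V) hP₂ hpW hps
    (fun w β => (hk w).outputLaw fun α => hch₂ (α, β)) hγ hr hLr
  obtain ⟨b, w, x, a, hle⟩ := exists_errorProb_le_add hP₁ hP₂ hpW hk hps hch₁ hch₂ hg₁ hg₂
  exact ⟨x, a, g₁ b w x, g₂ w a, hle.trans_eq (by ring)⟩

end RandomCoding

section Concentration

variable {α : Type*} [Fintype α] {p : α → ℝ}

lemma mean_prodLaw_sq_sum {ι : Type*} [Fintype ι] [DecidableEq ι] (hp : IsPMF p) {f : α → ℝ}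
    (hf : mean p f = 0) :
    mean (prodLaw fun _ : ι => p) (fun x => (∑ i, f (x i)) ^ 2) =
      Fintype.card ι * mean p fun a => f a ^ 2 := by
  have hcov : ∀ i j, mean (prodLaw fun _ : ι => p) (fun x => f (x i) * f (x j)) =
      if i = j then mean p fun a => f a ^ 2 else 0 := fun i j => by
    split_ifs with h
    · subst h
      rw [mean_prodLaw_apply (fun _ => hp) i fun a => f a * f a]
      simp only [sq]
    · rw [mean_prodLaw_apply_apply (fun _ => hp) h fun a b => f a * f b]
      simp only [mean_const_mul, hf, mul_zero, mean_const hp]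
  simp only [sq (∑ _, _), sum_mul_sum, mean_finset_sum, hcov, sum_ite_eq, mem_univ, if_true,
    sum_const, card_univ, nsmul_eq_mul]

lemma tendsto_mean_ind_sum_lt (hp : IsPMF p) {f : α → ℝ} {δ : ℝ} (hδ : δ < mean p f) :
    Tendsto (fun n : ℕ => mean (prodLaw fun _ : Fin n => p) fun x => ind (∑ i, f (x i) < n * δ))
      atTop (nhds 0) := by
  have hcentered : mean p (fun a => f a - mean p f) = 0 := by
    rw [mean_sub, mean_const hp, sub_self]
  have hη : 0 < mean p f - δ := sub_pos.2 hδ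
  refine squeeze_zero'
    (.of_forall fun n => mean_nonneg (IsPMF.prodLaw fun _ => hp) fun x => ind_nonneg _)
    ((eventually_gt_atTop 0).mono fun n hn => ?_) (tendsto_const_div_atTop_nhds_zero_nat
      ((mean p fun a => (f a - mean p f) ^ 2) / (mean p f - δ) ^ 2))
  have hn' : (0 : ℝ) < n := Nat.cast_pos.2 hn
  have hcheb : ∀ x : Fin n → α, ind (∑ i, f (x i) < n * δ) ≤
      (∑ i, (f (x i) - mean p f)) ^ 2 * ((n * (mean p f - δ)) ^ 2)⁻¹ := fun x => by
    by_cases h : ∑ i, f (x i) < n * δ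
    · rw [ind_true h, ← div_eq_mul_inv, one_le_div (by positivity), sq_le_sq,
        abs_of_pos (mul_pos hn' hη), sum_sub_distrib, sum_const, card_univ, Fintype.card_fin,
        nsmul_eq_mul]
      exact le_abs.2 (Or.inr (by linarith))
    · rw [ind_false h]
      positivity
  refine (mean_mono (IsPMF.prodLaw fun _ => hp) fun x _ => hcheb x).trans_eq ?_
  rw [mean_mul_const, mean_prodLaw_sq_sum hp hcentered, Fintype.card_fin]
  field_simp

lemma tendsto_mean_ind_not_exp_mul_prod_le (hp : IsPMF p) {N D : α → ℝ}
    (hN : ∀ a, 0 < p a → 0 < N a) (hD : ∀ a, 0 < p a → 0 < D a) {δ : ℝ}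
    (hδ : δ < mean p fun a => log (N a) - log (D a)) :
    Tendsto (fun n : ℕ => mean (prodLaw fun _ : Fin n => p) fun x =>
      ind (¬exp (n * δ) * ∏ i, D (x i) ≤ ∏ i, N (x i))) atTop (nhds 0) := by
  refine squeeze_zero (fun n => mean_nonneg (IsPMF.prodLaw fun _ => hp) fun x => ind_nonneg _)
    (fun n => mean_mono (IsPMF.prodLaw fun _ => hp) fun x hx => ind_mono fun hfail => ?_)
    (tendsto_mean_ind_sum_lt hp hδ)
  have hpos : ∀ i, 0 < p (x i) := fun i =>
    (hp.1 _).lt_of_ne' (prod_ne_zero_iff.1 hx.ne' i (mem_univ i))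
  have hDx : 0 < ∏ i, D (x i) := prod_pos fun i _ => hD _ (hpos i)
  have hlog := log_lt_log (prod_pos fun i _ => hN _ (hpos i)) (not_le.1 hfail)
  rw [log_mul (exp_pos _).ne' hDx.ne', log_exp, log_prod fun i _ => (hN _ (hpos i)).ne',
    log_prod fun i _ => (hD _ (hpos i)).ne'] at hlog
  rw [sum_sub_distrib]
  linarith

end Concentration

section BlockTest

variable {U W A Y : Type*} [Fintype U] [Fintype W] [Fintype A] [Fintype Y]
  {P : U → ℝ} {pW : W → ℝ} {k : W → A → ℝ} {c : W → A → Y → ℝ}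

/-- The joint law of a message of law `P` and of an independent cloud, codeword and output. -/
def testLaw (P : U → ℝ) (pW : W → ℝ) (k : W → A → ℝ) (c : W → A → Y → ℝ) : U × W × A × Y → ℝ :=
  jointLaw P fun _ => jointLaw pW fun w => jointLaw (k w) (c w)

lemma IsPMF.testLaw (hP : IsPMF P) (hpW : IsPMF pW) (hk : IsKernel k) (hc : ∀ w, IsKernel (c w)) :
    IsPMF (testLaw P pW k c) :=
  hP.jointLaw fun _ => hpW.jointLaw fun w => (hk w).jointLaw (hc w)

lemma mean_testLaw (f : U × W × A × Y → ℝ) :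
    mean (testLaw P pW k c) f = mean P fun u => mean pW fun w => mean (k w) fun x =>
      mean (c w x) fun y => f (u, w, x, y) := by
  simp only [testLaw, mean_jointLaw]

lemma testLaw_pos (hP : IsPMF P) (hpW : IsPMF pW) (hk : IsKernel k) (hc : ∀ w, IsKernel (c w))
    {u : U} {w : W} {x : A} {y : Y} (hpos : 0 < testLaw P pW k c (u, w, x, y)) :
    0 < P u ∧ 0 < c w x y ∧ 0 < outputLaw (k w) (c w) y ∧
      0 < outputLaw pW (fun w => outputLaw (k w) (c w)) y := by
  have hu := jointLaw_pos hP hpos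
  have hw := jointLaw_pos hpW hu.2
  have ho := outputLaw_pos (hk w) (hc w) hw.2
  exact ⟨hu.1, (jointLaw_pos (hk w) hw.2).2, ho,
    outputLaw_pos (x := (w, y)) hpW (fun w => (hk w).outputLaw (hc w)) (mul_pos hw.1 ho)⟩

lemma mean_testLaw_log_sub_log (hP : IsPMF P) (hpW : IsPMF pW) (hk : IsKernel k)
    (hc : ∀ w, IsKernel (c w)) {N : U → ℝ} (hN : ∀ u, 0 < P u → 0 < N u) (D : W → Y → ℝ) :
    (mean (testLaw P pW k c) fun a =>
        log (N a.1 * c a.2.1 a.2.2.1 a.2.2.2) - log (D a.2.1 a.2.2.2)) =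
      (mean P fun u => log (N u)) - (mean pW fun w => mean (k w) fun x => natEntropy (c w x)) +
        mean pW fun w => mean (outputLaw (k w) (c w)) fun y => -log (D w y) := by
  calc _ = mean (testLaw P pW k c) fun a =>
        log (N a.1) + log (c a.2.1 a.2.2.1 a.2.2.2) - log (D a.2.1 a.2.2.2) :=
        mean_congr (hP.testLaw hpW hk hc) fun ⟨u, w, x, y⟩ ha => by
          have hpos := testLaw_pos hP hpW hk hc ha
          rw [log_mul (hN u hpos.1).ne' hpos.2.1.ne']
    _ = _ := by
        simp only [mean_testLaw, mean_add, mean_sub, mean_const (hc _ _), mean_const (hk _),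
          mean_const hpW, mean_const hP, mean_outputLaw, natEntropy_eq_mean, mean_neg]
        ring

lemma mean_prodLaw_testLaw {ι : Type*} [Fintype ι] [DecidableEq ι] (F : (ι → U × W × A × Y) → ℝ) :
    mean (prodLaw fun _ => testLaw P pW k c) F =
      mean (prodLaw fun _ => P) fun u => mean (prodLaw fun _ => pW) fun w =>
        mean (prodLaw fun i => k (w i)) fun x => mean (prodLaw fun i => c (w i) (x i)) fun y =>
          F fun i => (u i, w i, x i, y i) := by
  simp only [testLaw, mean_prodLaw_jointLaw]

lemma missProb_nonneg (hP : IsPMF P) (hpW : IsPMF pW) (hk : IsKernel k) (hc : ∀ w, IsKernel (c w))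
    (γ : ℝ) (N₁ N₂ : U → ℝ) : 0 ≤ missProb P pW k c γ N₁ N₂ :=
  mean_nonneg hP fun _ => mean_nonneg hpW fun _ => mean_nonneg (hk _) fun _ =>
    mean_nonneg (hc _ _) fun _ => ind_nonneg _

lemma missProb_prodLaw_le {ι : Type*} [Fintype ι] [DecidableEq ι] (hP : IsPMF P) (hpW : IsPMF pW)
    (hk : IsKernel k) (hc : ∀ w, IsKernel (c w)) (γ : ℝ) (N₁ N₂ : U → ℝ) :
    missProb (prodLaw fun _ : ι => P) (prodLaw fun _ => pW) (fun w => prodLaw fun i => k (w i))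
        (fun w x => prodLaw fun i : ι => c (w i) (x i)) γ
        (fun u => ∏ i, N₁ (u i)) (fun u => ∏ i, N₂ (u i)) ≤
      (mean (prodLaw fun _ : ι => testLaw P pW k c) fun a => ind (¬γ *
        ∏ i, outputLaw pW (fun w => outputLaw (k w) (c w)) (a i).2.2.2 ≤
          ∏ i, N₁ (a i).1 * c (a i).2.1 (a i).2.2.1 (a i).2.2.2)) +
      mean (prodLaw fun _ : ι => testLaw P pW k c) fun a => ind (¬γ *
        ∏ i, outputLaw (k (a i).2.1) (c (a i).2.1) (a i).2.2.2 ≤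
          ∏ i, N₂ (a i).1 * c (a i).2.1 (a i).2.2.1 (a i).2.2.2) := by
  rw [← mean_add, mean_prodLaw_testLaw]
  refine mean_mono (IsPMF.prodLaw fun _ => hP) fun u _ =>
    mean_mono (IsPMF.prodLaw fun _ => hpW) fun w _ => mean_mono (IsPMF.prodLaw fun i => hk (w i))
      fun x _ => mean_mono (IsPMF.prodLaw fun i => hc (w i) (x i)) fun y _ => ?_
  simp only [JointTest, fun w : ι → W => outputLaw_prodLaw (fun i => k (w i)) fun i => c (w i),
    outputLaw_prodLaw (fun _ : ι => pW) fun _ w => outputLaw (k w) (c w)]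
  simp only [prodLaw, ← prod_mul_distrib, not_and_or]
  exact ind_or_le _ _

lemma tendsto_missProb {N₁ N₂ : U → ℝ} {δ : ℝ} (hP : IsPMF P) (hpW : IsPMF pW) (hk : IsKernel k)
    (hc : ∀ w, IsKernel (c w)) (hN₁ : ∀ u, 0 < P u → 0 < N₁ u) (hN₂ : ∀ u, 0 < P u → 0 < N₂ u)
    (hδ₁ : δ < (mean P fun u => log (N₁ u)) + infoNats (jointLaw pW k) fun v => c v.1 v.2)
    (hδ₂ : δ < (mean P fun u => log (N₂ u)) + mean pW fun w => infoNats (k w) (c w)) :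
    Tendsto (fun n : ℕ => missProb (prodLaw fun _ : Fin n => P) (prodLaw fun _ : Fin n => pW)
      (fun w => prodLaw fun i => k (w i)) (fun w x => prodLaw fun i => c (w i) (x i))
      (exp (n * δ)) (fun u => ∏ i, N₁ (u i)) (fun u => ∏ i, N₂ (u i))) atTop (nhds 0) := by
  have htest := fun (N : U → ℝ) (hN : ∀ u, 0 < P u → 0 < N u) (D : W → Y → ℝ) =>
    tendsto_mean_ind_not_exp_mul_prod_le (hP.testLaw hpW hk hc) (δ := δ)
      (N := fun a => N a.1 * c a.2.1 a.2.2.1 a.2.2.2) (D := fun a => D a.2.1 a.2.2.2)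
      fun a ha => mul_pos (hN _ (testLaw_pos hP hpW hk hc ha).1) (testLaw_pos hP hpW hk hc ha).2.1
  have hcloud := htest N₁ hN₁ (fun _ => outputLaw pW fun w => outputLaw (k w) (c w))
    (fun a ha => (testLaw_pos hP hpW hk hc ha).2.2.2) <| by
      have hout : outputLaw (jointLaw pW k) (fun v => c v.1 v.2) =
          outputLaw pW fun w => outputLaw (k w) (c w) := funext fun y => mean_jointLaw ..
      rw [infoNats, mean_jointLaw, hout] at hδ₁
      rw [mean_testLaw_log_sub_log hP hpW hk hc hN₁ fun _ => outputLaw _ _, ← mean_outputLaw,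
        ← natEntropy_eq_mean]
      linarith
  have hsatellite := htest N₂ hN₂ (fun w => outputLaw (k w) (c w))
    (fun a ha => (testLaw_pos hP hpW hk hc ha).2.2.1) <| by
      simp only [infoNats, mean_sub] at hδ₂
      rw [mean_testLaw_log_sub_log hP hpW hk hc hN₂ fun w => outputLaw (k w) (c w)]
      simp only [← natEntropy_eq_mean]
      linarith
  refine squeeze_zero (fun n => ?_) (fun n => missProb_prodLaw_le hP hpW hk hc _ N₁ N₂)
    (by simpa only [add_zero] using hcloud.add hsatellite)
  exact missProb_nonneg (IsPMF.prodLaw fun _ => hP) (IsPMF.prodLaw fun _ => hpW)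
    (fun w => IsPMF.prodLaw fun i => hk (w i))
    (fun w x => IsPMF.prodLaw fun i => hc (w i) (x i)) _ _ _

end BlockTest

section BlockAchievability

variable {W : Type*} [Fintype W] {ch1 : X1 → Y1 → ℝ} {ch2 : X1 × X2 → Y2 → ℝ} {pstar : X2 → ℝ}
  {pU1 : U1 → ℝ} {h1 : U1 → V1} {pU2 : U2 → ℝ} {q : V1 → ℝ} {ρ : V1 → U1 → ℝ} {pW : W → ℝ}
  {k : W → X1 → ℝ}

lemma exists_PerrZDet_le (hch1 : IsKernel ch1) (hch2 : IsKernel ch2) (hps : IsPMF pstar)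
    (hpU1 : IsPMF pU1) (hpU2 : IsPMF pU2) (hρ : IsKernel ρ) (hpW : IsPMF pW) (hk : IsKernel k)
    {R : ℝ} (hR : 0 ≤ R) (δ : ℝ) (n : ℕ) :
    ∃ f1 f2 g1 g2, PerrZDet ch1 ch2 pU1 h1 pU2 n f1 f2 g1 g2 ≤
      missProb (prodLaw fun _ : Fin n => pU1) (prodLaw fun _ : Fin n => pW)
        (fun w => prodLaw fun i => k (w i)) (fun _ x => prodLaw fun i => ch1 (x i)) (exp (n * δ))
        (fun u => ∏ i, pU1 (u i)) (fun u => ∏ i, exp R * ρ (h1 (u i)) (u i)) +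
      missProb (prodLaw fun _ : Fin n => pU2) (prodLaw fun _ : Fin n => pW)
        (fun _ => prodLaw fun _ => pstar)
        (fun w x => prodLaw fun i => outputLaw (k (w i)) fun α => ch2 (α, x i)) (exp (n * δ))
        (fun t => ∏ i, pU2 (t i) / exp R) (fun t => ∏ i, pU2 (t i)) +
      5 * exp (n * -δ) := by
  have hr : 1 ≤ exp (n * R) := one_le_exp (by positivity)
  have hceil : (0 : ℕ) < ⌈exp (n * R)⌉₊ := Nat.ceil_pos.2 (exp_pos _)
  have : Nonempty (Fin ⌈exp (n * R)⌉₊) := ⟨⟨0, hceil⟩⟩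
  obtain ⟨f1, f2, g1, g2, hle⟩ := exists_errorProb_le (L := Fin ⌈exp (n * R)⌉₊)
    (h := fun u i => h1 (u i)) (IsPMF.prodLaw fun _ : Fin n => hpU1)
    (IsPMF.prodLaw fun _ : Fin n => hpU2) (IsPMF.prodLaw fun _ : Fin n => hpW)
    (IsKernel.prodLaw fun _ => hk) (IsPMF.prodLaw fun _ : Fin n => hps)
    (IsKernel.prodLaw fun _ : Fin n => hch1)
    (ch₂ := fun x : (Fin n → X1) × (Fin n → X2) => prodLaw fun i => ch2 (x.1 i, x.2 i))
    (fun x => IsPMF.prodLaw fun i => hch2 (x.1 i, x.2 i)) (IsKernel.prodLaw fun _ => hρ)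
    (exp_pos (n * δ)) (exp_pos (n * R)) (by rw [Fintype.card_fin]; exact Nat.le_ceil _) (by
      rw [Fintype.card_fin]
      linarith [Nat.ceil_lt_add_one (exp_pos (n * R)).le])
  refine ⟨f1, f2, g1, g2, (PerrZDet_eq_errorProb ..).trans_le (hle.trans_eq ?_)⟩
  have hpow : exp (n * R) = ∏ _i : Fin n, exp R := by
    rw [prod_const, card_univ, Fintype.card_fin, ← exp_nat_mul]
  have hout : ∀ (w : Fin n → W) (x : Fin n → X2),
      (outputLaw (prodLaw fun i => k (w i)) fun α => prodLaw fun i => ch2 (α i, x i)) =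
        prodLaw fun i => outputLaw (k (w i)) fun α => ch2 (α, x i) :=
    fun w x => outputLaw_prodLaw (fun i => k (w i)) fun i α => ch2 (α, x i)
  rw [div_eq_mul_inv, ← exp_neg, mul_neg, hpow]
  simp only [hout, prod_mul_distrib, prod_div_distrib]
  rfl

lemma disintegration_pos (hpU1 : IsPMF pU1) (hq : IsPMF q)
    (hdis : pr pU1 (fun u => (h1 u, u)) = jointLaw q ρ) {u : U1} (hu : 0 < pU1 u) :
    0 < ρ (h1 u) u := by
  have hpos : 0 < pr pU1 (fun u => (h1 u, u)) (h1 u, u) :=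
    hu.trans_le (le_pr_apply hpU1 (fun u => (h1 u, u)) u)
  rw [hdis] at hpos
  exact (jointLaw_pos hq hpos).2

lemma mean_log_exp_mul_disintegration (hpU1 : IsPMF pU1) (hq : IsPMF q)
    (hdis : pr pU1 (fun u => (h1 u, u)) = jointLaw q ρ) (R : ℝ) :
    (mean pU1 fun u => log (exp R * ρ (h1 u) u)) = R - mean q fun v => natEntropy (ρ v) := by
  have hlog : (mean pU1 fun u => log (ρ (h1 u) u)) = -mean q fun v => natEntropy (ρ v) := by
    simp only [pr_eq_iff.1 hdis fun x => log (ρ x.1 x.2), mean_jointLaw, natEntropy_eq_mean,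
      mean_neg, neg_neg]
  rw [sub_eq_add_neg, ← hlog, ← mean_const hpU1 R, ← mean_add]
  exact mean_congr hpU1 fun u hu => by
    rw [log_mul (exp_pos _).ne' (disintegration_pos hpU1 hq hdis hu).ne', log_exp, mean_const hpU1]

lemma mean_log_div_exp (hpU2 : IsPMF pU2) (R : ℝ) :
    (mean pU2 fun t => log (pU2 t / exp R)) = -natEntropy pU2 - R := by
  rw [natEntropy_eq_mean, ← mean_neg, ← mean_const hpU2 R, ← mean_sub]
  exact mean_congr hpU2 fun t ht => by
    rw [log_div ht.ne' (exp_pos _).ne', log_exp, neg_neg, mean_const hpU2]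

lemma exists_rate_and_exponent {H₁ H₂ Hc I₁ I₂ Ic : ℝ} (h₁ : H₁ < I₁) (h₂ : H₂ < I₂)
    (hsum : Hc + H₂ < I₂ + Ic) :
    ∃ R δ, 0 ≤ R ∧ 0 < δ ∧ δ < I₁ - H₁ ∧ δ < R - Hc + Ic ∧ δ < I₂ - H₂ - R := by
  have h : max 0 (Hc - Ic) < I₂ - H₂ := max_lt (by linarith) (by linarith)
  obtain ⟨R, hlo, hhi⟩ := exists_between h
  obtain ⟨hR, hRc⟩ := max_lt_iff.1 hlo
  have hc : 0 < R - Hc + Ic := by linarith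
  obtain ⟨δ, hδ, hlt⟩ := exists_between (lt_min (lt_min (sub_pos.2 h₁) hc) (sub_pos.2 hhi))
  simp only [lt_min_iff] at hlt
  exact ⟨R, δ, hR.le, hδ, hlt.1.1, hlt.1.2, hlt.2⟩

theorem reliable_of_lt_infoNats (hch1 : IsKernel ch1) (hch2 : IsKernel ch2)
    (hc2 : Cond2 ch2 pstar) (hpU1 : IsPMF pU1) (hpU2 : IsPMF pU2) (hq : IsPMF q)
    (hρ : IsKernel ρ) (hdis : pr pU1 (fun u => (h1 u, u)) = jointLaw q ρ) (hpW : IsPMF pW)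
    (hk : IsKernel k) (h₁ : natEntropy pU1 < infoNats (outputLaw pW k) ch1)
    (h₂ : natEntropy pU2 < infoNats (jointLaw pW fun _ => pstar)
      fun v => outputLaw (k v.1) fun x => ch2 (x, v.2))
    (hsum : (mean q fun v => natEntropy (ρ v)) + natEntropy pU2 <
      infoNats (jointLaw pW fun _ => pstar)
        (fun v => outputLaw (k v.1) fun x => ch2 (x, v.2)) +
      mean pW fun w => infoNats (k w) ch1) :
    ReliableZDet ch1 ch2 pU1 h1 pU2 := by
  obtain ⟨R, δ, hR, hδ, hδ₁, hδc, hδ₂⟩ := exists_rate_and_exponent h₁ h₂ hsum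
  have hlog : ∀ {α : Type} [Fintype α] (p : α → ℝ), mean p (fun a => log (p a)) = -natEntropy p :=
    fun p => by rw [natEntropy_eq_mean, mean_neg, neg_neg]
  have hmiss₁ := tendsto_missProb (c := fun _ => ch1) (N₁ := pU1)
    (N₂ := fun u => exp R * ρ (h1 u) u) (δ := δ) hpU1 hpW hk (fun _ => hch1) (fun _ => id)
    (fun u hu => mul_pos (exp_pos R) (disintegration_pos hpU1 hq hdis hu))
    (by rw [hlog, infoNats_jointLaw_snd]; linarith)
    (by rw [mean_log_exp_mul_disintegration hpU1 hq hdis]; linarith)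
  have hmiss₂ := tendsto_missProb (k := fun _ => pstar)
    (c := fun w x2 => outputLaw (k w) fun x => ch2 (x, x2))
    (N₁ := fun t => pU2 t / exp R) (N₂ := pU2) (δ := δ) hpU2 hpW (fun _ => hc2.1)
    (fun w x2 => (hk w).outputLaw fun x => hch2 (x, x2))
    (fun t ht => div_pos ht (exp_pos R)) (fun _ => id)
    (by rw [mean_log_div_exp hpU2]; linarith)
    (by rw [hlog, ← hc2.infoNats_jointLaw_eq_mean hpW hk]; linarith)
  have hconf : Tendsto (fun n : ℕ => 5 * exp (n * -δ)) atTop (nhds 0) := by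
    have hexp := tendsto_exp_atBot.comp
      (tendsto_natCast_atTop_atTop.atTop_mul_const_of_neg (neg_neg_of_pos hδ))
    simpa only [mul_zero, Function.comp_def] using hexp.const_mul 5
  choose f1 f2 g1 g2 hle using
    exists_PerrZDet_le (h1 := h1) hch1 hch2 hc2.1 hpU1 hpU2 hρ hpW hk hR δ
  refine ⟨f1, f2, g1, g2, squeeze_zero (fun n => ?_) hle
    (by simpa only [add_zero] using (hmiss₁.add hmiss₂).add hconf)⟩
  rw [PerrZDet_eq_errorProb]
  exact errorProb_nonneg (IsPMF.prodLaw fun _ => hpU1) (IsPMF.prodLaw fun _ => hpU2)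
    (IsKernel.prodLaw fun _ => hch1) fun x => IsPMF.prodLaw fun i => hch2 (x.1 i, x.2 i)

end BlockAchievability

theorem stmt6 (ch1 : X1 → Y1 → ℝ) (ch2 : X1 × X2 → Y2 → ℝ) (pstar : X2 → ℝ)
    (pU1 : U1 → ℝ) (h1 : U1 → V1) (pU2 : U2 → ℝ)
    (hch1 : IsKernel ch1) (hch2 : IsKernel ch2)
    (hc1 : Cond1 ch2) (hc2 : Cond2 ch2 pstar)
    (hpU1 : IsPMF pU1) (hpU2 : IsPMF pU2) :
    ((∃ (m : ℕ) (pW : Fin m → ℝ) (k : Fin m → X1 → ℝ),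
        IsPMF pW ∧ (∀ w, IsPMF (k w)) ∧
        (let p := jointZ m pW k pstar ch1 ch2
         let vW := fun (ω : Fin m × X1 × X2 × Y1 × Y2) => ω.1
         let vX1 := fun (ω : Fin m × X1 × X2 × Y1 × Y2) => ω.2.1
         let vX2 := fun (ω : Fin m × X1 × X2 × Y1 × Y2) => ω.2.2.1
         let vY1 := fun (ω : Fin m × X1 × X2 × Y1 × Y2) => ω.2.2.2.1
         let vY2 := fun (ω : Fin m × X1 × X2 × Y1 × Y2) => ω.2.2.2.2
         ent pU1 id < mi p vX1 vY1 ∧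
         ent pU2 id < mi p (fun ω => (vW ω, vX2 ω)) vY2 ∧
         condEnt pU1 id h1 + ent pU2 id <
           mi p (fun ω => (vW ω, vX2 ω)) vY2 + cmi p vX1 vY1 vW)) →
      ReliableZDet ch1 ch2 pU1 h1 pU2) ∧
    (ReliableZDet ch1 ch2 pU1 h1 pU2 →
      ∃ (m : ℕ) (pW : Fin m → ℝ) (k : Fin m → X1 → ℝ),
        IsPMF pW ∧ (∀ w, IsPMF (k w)) ∧
        (let p := jointZ m pW k pstar ch1 ch2
         let vW := fun (ω : Fin m × X1 × X2 × Y1 × Y2) => ω.1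
         let vX1 := fun (ω : Fin m × X1 × X2 × Y1 × Y2) => ω.2.1
         let vX2 := fun (ω : Fin m × X1 × X2 × Y1 × Y2) => ω.2.2.1
         let vY1 := fun (ω : Fin m × X1 × X2 × Y1 × Y2) => ω.2.2.2.1
         let vY2 := fun (ω : Fin m × X1 × X2 × Y1 × Y2) => ω.2.2.2.2
         ent pU1 id ≤ mi p vX1 vY1 ∧
         ent pU2 id ≤ mi p (fun ω => (vW ω, vX2 ω)) vY2 ∧
         condEnt pU1 id h1 + ent pU2 id ≤
           mi p (fun ω => (vW ω, vX2 ω)) vY2 + cmi p vX1 vY1 vW)) := by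
  obtain ⟨ρ, hρ, hdis⟩ := exists_disintegration hpU1 h1 id
  have hq := isPMF_pr hpU1 h1
  have hlog := log_pos one_lt_two
  have hZX1 := fun m (pW : Fin m → ℝ) (k : Fin m → X1 → ℝ) =>
    mi_jointZ_X1_Y1 (pW := pW) (k := k) hc2.1 hch1 hch2
  refine ⟨?_, fun hrel => ?_⟩
  · rintro ⟨m, pW, k, hpW, hk, h₁, h₂, hsum⟩
    rw [ent_id, hZX1, div_lt_div_iff_of_pos_right hlog] at h₁
    rw [ent_id, mi_jointZ_WX2_Y2 hk hch1 hch2, div_lt_div_iff_of_pos_right hlog] at h₂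
    rw [condEnt_eq hρ hdis, ent_id, mi_jointZ_WX2_Y2 hk hch1 hch2,
      cmi_jointZ_X1_Y1_W hk hc2.1 hch1 hch2, ← add_div, ← add_div,
      div_lt_div_iff_of_pos_right hlog] at hsum
    exact reliable_of_lt_infoNats hch1 hch2 hc2 hpU1 hpU2 hq hρ hdis hpW hk h₁ h₂ hsum
  · obtain ⟨m, pW, k, hpW, hk, h₁, h₂, hsum⟩ :=
      exists_auxiliary_of_reliable hch1 hch2 hc1 hc2 hpU1 hpU2 hq hρ hdis hrel
    refine ⟨m, pW, k, hpW, hk, ?_⟩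
    dsimp only
    rw [condEnt_eq hρ hdis, ent_id, ent_id, hZX1, mi_jointZ_WX2_Y2 hk hch1 hch2,
      cmi_jointZ_X1_Y1_W hk hc2.1 hch1 hch2, ← add_div, ← add_div]
    simp only [div_le_div_iff_of_pos_right hlog]
    exact ⟨h₁, h₂, hsum⟩

end Stmt6

end Paper
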